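/- arXiv:0705.0844 — 9 statements merged into one kernel-verified Lean document; each statement's English description precedes it below -/
import Mathlib

section
/- Let Γ be a group, and let F ⊆ F̃ be two collections of subgroups of Γ, each closed under conjugation and under passing to subgroups. Suppose a collection 𝓗 of subgroups of Γ is adapted to the pair (F, F̃), i.e.: (1) for all H₁, H₂ ∈ 𝓗, either H₁ = H₂ or H₁ ⊓ H₂ ∈ F; (2) 𝓗 is closed under conjugation; (3) every H ∈ 𝓗 is self-normalizing (N_Γ(H) = H); (4) every G ∈ F̃ \ F is contained in some H ∈ 𝓗. Then the relation on F̃ \ F defined by G₁ ∼ G₂ if and only if there exists H ∈ 𝓗 with G₁ ≤ H and G₂ ≤ H is an equivalence relation (reflexive, symmetric, and transitive). -/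
theorem equivalence_exists_common_of_existsUnique {α β : Type*} {r : α → β → Prop} {t : Set β}
    (h : ∀ x, ∃! b ∈ t, r x b) : Equivalence fun x y => ∃ b ∈ t, r x b ∧ r y b where
  refl x :=
    let ⟨b, ⟨hb, hxb⟩, _⟩ := h x
    ⟨b, hb, hxb, hxb⟩
  symm := fun ⟨b, hb, hxb, hyb⟩ => ⟨b, hb, hyb, hxb⟩
  trans := by
    rintro x y z ⟨b, hb, hxb, hyb⟩ ⟨c, hc, hyc, hzc⟩
    obtain rfl : b = c := (h y).unique ⟨hb, hyb⟩ ⟨hc, hyc⟩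
    exact ⟨b, hb, hxb, hzc⟩

section SemilatticeInf

variable {α : Type*} [SemilatticeInf α] {F t : Set α}

theorem eq_of_le_of_le_of_pairwise_inf_mem (hF : IsLowerSet F)
    (ht : t.Pairwise fun a b => a ⊓ b ∈ F) {x a b : α} (hx : x ∉ F)
    (ha : a ∈ t) (hb : b ∈ t) (hxa : x ≤ a) (hxb : x ≤ b) : a = b :=
  ht.eq ha hb fun hab => hx (hF (le_inf hxa hxb) hab)

theorem adapted_relation_is_equivalence_general {S : Set α} (hF : IsLowerSet F)
    (ht : t.Pairwise fun a b => a ⊓ b ∈ F) (hcover : ∀ x ∈ S \ F, ∃ a ∈ t, x ≤ a) :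
    Equivalence fun x y : {x : α // x ∈ S \ F} => ∃ a ∈ t, x.1 ≤ a ∧ y.1 ≤ a := by
  refine equivalence_exists_common_of_existsUnique fun x => ?_
  obtain ⟨a, ha, hxa⟩ := hcover x x.2
  exact ⟨a, ⟨ha, hxa⟩, fun b ⟨hb, hxb⟩ =>
    eq_of_le_of_le_of_pairwise_inf_mem hF ht x.2.2 hb ha hxb hxa⟩

end SemilatticeInf

/-- If the collection `𝓗` of subgroups of `Γ` is adapted to the nested pair of
families `(F, F̃)`, then the relation on `F̃ \ F` given by `G₁ ∼ G₂ ↔ ∃ H ∈ 𝓗, G₁ ≤ H ∧ G₂ ≤ H`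
is an equivalence relation. -/
theorem adapted_relation_is_equivalence {Γ : Type*} [Group Γ]
    (F Ftilde : Set (Subgroup Γ))
    (hFF : F ⊆ Ftilde)
    (hFconj : ∀ H ∈ F, ∀ g : Γ, Subgroup.map (MulAut.conj g).toMonoidHom H ∈ F)
    (hFsub : ∀ H ∈ F, ∀ K : Subgroup Γ, K ≤ H → K ∈ F)
    (hFtconj : ∀ H ∈ Ftilde, ∀ g : Γ, Subgroup.map (MulAut.conj g).toMonoidHom H ∈ Ftilde)
    (hFtsub : ∀ H ∈ Ftilde, ∀ K : Subgroup Γ, K ≤ H → K ∈ Ftilde)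
    (𝓗 : Set (Subgroup Γ))
    (h1 : ∀ H₁ ∈ 𝓗, ∀ H₂ ∈ 𝓗, H₁ = H₂ ∨ H₁ ⊓ H₂ ∈ F)
    (h2 : ∀ H ∈ 𝓗, ∀ g : Γ, Subgroup.map (MulAut.conj g).toMonoidHom H ∈ 𝓗)
    (h3 : ∀ H ∈ 𝓗, Subgroup.normalizer H = H)
    (h4 : ∀ G ∈ Ftilde \ F, ∃ H ∈ 𝓗, G ≤ H) :
    Equivalence (fun G₁ G₂ : {G : Subgroup Γ // G ∈ Ftilde \ F} =>
      ∃ H ∈ 𝓗, G₁.1 ≤ H ∧ G₂.1 ≤ H) :=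
  adapted_relation_is_equivalence_general (fun H K hKH hH => hFsub H hH K hKH)
    (fun H hH K hK hne => (h1 H hH K hK).resolve_left hne) h4
end

section
/- Let Γ be a group, let F ⊆ F̃ be two collections of subgroups of Γ, each closed under conjugation and under passing to subgroups, and let 𝓗 be a collection of subgroups adapted to (F, F̃) (conditions (1)-(4)). Let G ∈ F̃ \ F and let H be the unique element of 𝓗 with G ≤ H. Then for every k ∈ Γ the following are equivalent: (a) there exists H' ∈ 𝓗 with G ≤ H' and kGk⁻¹ ≤ H'; (b) k ∈ H. (In the notation of the paper: N_Γ[G] = H.) -/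
/-!
Distinct members of `𝓗` meet in a member of `F`, so a subgroup `G ∉ F` lies in at most one member
of `𝓗`. If `G` and `kGk⁻¹` both lie in `H ∈ 𝓗`, then `G` lies in both `H` and `k⁻¹Hk`, which is
again in `𝓗`; hence `k⁻¹Hk = H`, i.e. `k` normalizes `H`.
-/

theorem eq_of_le_of_pairwise_inf_mem {α : Type*} [SemilatticeInf α] {F S : Set α}
    (hF : IsLowerSet F) (hS : S.Pairwise fun a b ↦ a ⊓ b ∈ F) {a b c : α} (ha : a ∈ S) (hb : b ∈ S)
    (hc : c ∉ F) (hca : c ≤ a) (hcb : c ≤ b) : a = b :=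
  hS.eq ha hb fun hab ↦ hc (hF (le_inf hca hcb) hab)

theorem map_conj_le_iff_le_map_conj_inv {Γ : Type*} [Group Γ] {G H : Subgroup Γ} {k : Γ} :
    G.map (MulAut.conj k).toMonoidHom ≤ H ↔ G ≤ H.map (MulAut.conj k⁻¹).toMonoidHom := by
  rw [Subgroup.map_le_iff_le_comap, Subgroup.comap_equiv_eq_map_symm', map_inv, MulAut.inv_def]

theorem adapted_N_gamma_eq_general {Γ : Type*} [Group Γ] {F 𝓗 : Set (Subgroup Γ)}
    (hF : IsLowerSet F) (h_inf : 𝓗.Pairwise fun H₁ H₂ ↦ H₁ ⊓ H₂ ∈ F)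
    (h_conj : ∀ H ∈ 𝓗, ∀ g : Γ, H.map (MulAut.conj g).toMonoidHom ∈ 𝓗)
    {G H : Subgroup Γ} (hG : G ∉ F) (hH : H ∈ 𝓗) (hGH : G ≤ H) (k : Γ) :
    (∃ H' ∈ 𝓗, G ≤ H' ∧ G.map (MulAut.conj k).toMonoidHom ≤ H') ↔ k ∈ Subgroup.normalizer H := by
  have eq_H {K : Subgroup Γ} (hK : K ∈ 𝓗) (hGK : G ≤ K) : K = H :=
    eq_of_le_of_pairwise_inf_mem hF h_inf hK hH hG hGK hGH
  constructor
  · rintro ⟨H', hH', hGH', hkG⟩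
    obtain rfl := eq_H hH' hGH'
    have hk : H'.map (MulAut.conj k⁻¹).toMonoidHom = H' :=
      eq_H (h_conj H' hH' k⁻¹) (map_conj_le_iff_le_map_conj_inv.mp hkG)
    exact inv_mem_iff.mp (Subgroup.mem_normalizer_iff_map_conj_eq.mpr hk)
  · intro hk
    have hkH : H.map (MulAut.conj k).toMonoidHom = H :=
      Subgroup.mem_normalizer_iff_map_conj_eq.mp hk
    exact ⟨H, hH, hGH, (Subgroup.map_mono hGH).trans_eq hkH⟩

/-- With `𝓗` adapted to `(F, F̃)`, `G ∈ F̃ \ F` and `H` the (unique) element of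
`𝓗` containing `G`, one has `N_Γ[G] = H`: for every `k ∈ Γ`, there is some `H' ∈ 𝓗`
containing both `G` and `kGk⁻¹` if and only if `k ∈ H`. -/
theorem adapted_N_gamma_eq {Γ : Type*} [Group Γ]
    (F Ftilde : Set (Subgroup Γ))
    (hFF : F ⊆ Ftilde)
    (hFconj : ∀ H ∈ F, ∀ g : Γ, Subgroup.map (MulAut.conj g).toMonoidHom H ∈ F)
    (hFsub : ∀ H ∈ F, ∀ K : Subgroup Γ, K ≤ H → K ∈ F)
    (hFtconj : ∀ H ∈ Ftilde, ∀ g : Γ, Subgroup.map (MulAut.conj g).toMonoidHom H ∈ Ftilde)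
    (hFtsub : ∀ H ∈ Ftilde, ∀ K : Subgroup Γ, K ≤ H → K ∈ Ftilde)
    (𝓗 : Set (Subgroup Γ))
    (h1 : ∀ H₁ ∈ 𝓗, ∀ H₂ ∈ 𝓗, H₁ = H₂ ∨ H₁ ⊓ H₂ ∈ F)
    (h2 : ∀ H ∈ 𝓗, ∀ g : Γ, Subgroup.map (MulAut.conj g).toMonoidHom H ∈ 𝓗)
    (h3 : ∀ H ∈ 𝓗, Subgroup.normalizer H = H)
    (h4 : ∀ G ∈ Ftilde \ F, ∃ H ∈ 𝓗, G ≤ H)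
    (G : Subgroup Γ) (hG : G ∈ Ftilde \ F)
    (H : Subgroup Γ) (hH : H ∈ 𝓗) (hGH : G ≤ H) :
    ∀ k : Γ,
      (∃ H' ∈ 𝓗, G ≤ H' ∧ Subgroup.map (MulAut.conj k).toMonoidHom G ≤ H') ↔ k ∈ H := by
  simpa only [h3 H hH] using adapted_N_gamma_eq_general (fun H K hKH hH ↦ hFsub H hH K hKH)
    (fun H₁ hH₁ H₂ hH₂ hne ↦ (h1 H₁ hH₁ H₂ hH₂).resolve_left hne) h2 hG.2 hH hGH
end

section
/- The amalgamated free product D_{10} *_{D_5} D_{10} is isomorphic to D_5 × D_∞. Concretely: let ι : D_5 → D_5 × ℤ/2 be the inclusion into the first factor; then the pushout (amalgamated free product) of two copies of ι, amalgamated along D_5, is isomorphic to the direct product D_5 × D_∞ of D_5 with the infinite dihedral group. -/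
/-!
A pushout of the inclusions `M → M × N i` only adds to `M` a copy of each `N i` that commutes
with `M`, so it is the product of `M` with the free product of the `N i`. The free product
`ℤ/2 * ℤ/2` is the infinite dihedral group, both being universal among groups generated by two
involutions.
-/

open Monoid DihedralGroup

section Cyclic

variable {G : Type*} [Group G] {n : ℕ}

/-- The homomorphism out of the cyclic group of order `n` (infinite cyclic if `n = 0`) that sends
the generator to an element `g` with `g ^ n = 1`. -/
def zmodPowersHom (n : ℕ) (g : G) (hg : g ^ n = 1) : Multiplicative (ZMod n) →* G :=
  AddMonoidHom.toMultiplicativeLeft <| ZMod.lift n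
    ⟨zmultiplesHom (Additive G) (.ofMul g), by
      rw [zmultiplesHom_apply, natCast_zsmul, ← ofMul_pow, hg, ofMul_one]⟩

theorem zmodPowersHom_ofAdd_intCast (g : G) (hg : g ^ n = 1) (k : ℤ) :
    zmodPowersHom n g hg (.ofAdd (k : ZMod n)) = g ^ k :=
  congrArg Additive.toMul (ZMod.lift_coe n _ k)

theorem zmodPowersHom_ofAdd_one (g : G) (hg : g ^ n = 1) :
    zmodPowersHom n g hg (.ofAdd 1) = g := by
  simpa only [Int.cast_one, zpow_one] using zmodPowersHom_ofAdd_intCast g hg 1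

theorem zmod_monoidHom_ext {M : Type*} [Monoid M] {f g : Multiplicative (ZMod n) →* M}
    (h : f (.ofAdd 1) = g (.ofAdd 1)) : f = g := by
  let quot : Multiplicative ℤ →* Multiplicative (ZMod n) :=
    AddMonoidHom.toMultiplicative (Int.castAddHom (ZMod n))
  have quot_surjective : Function.Surjective quot := ZMod.intCast_surjective
  refine (MonoidHom.cancel_right quot_surjective).mp (MonoidHom.ext_mint ?_)
  simpa [quot] using h

end Cyclic

section Dihedral

variable {G : Type*} [Group G] {n : ℕ}

theorem semiconjBy_mul_inv_of_mul_self {s t : G} (hs : s * s = 1) (ht : t * t = 1) :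
    SemiconjBy s (s * t) (s * t)⁻¹ := by
  rw [SemiconjBy, mul_inv_rev, inv_eq_of_mul_eq_one_left hs, inv_eq_of_mul_eq_one_left ht,
    ← mul_assoc, hs, one_mul, mul_assoc, hs, mul_one]

theorem semiconjBy_zmodPowersHom_inv {s g : G} (hg : g ^ n = 1) (h : SemiconjBy s g g⁻¹)
    (x : Multiplicative (ZMod n)) :
    SemiconjBy s (zmodPowersHom n g hg x) (zmodPowersHom n g hg x)⁻¹ := by
  obtain ⟨k, rfl⟩ := ZMod.intCast_surjective x
  have hk := h.zpow_right k
  rw [inv_zpow] at hk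
  exact (zmodPowersHom_ofAdd_intCast g hg k).symm ▸ hk

/-- The universal property of the presentation `⟨s, t | s², t², (st)ⁿ⟩` of the dihedral group,
with `s` and `t` the reflections `sr 0` and `sr 1`. -/
def dihedralLift (n : ℕ) (s t : G) (hs : s * s = 1) (ht : t * t = 1) (hst : (s * t) ^ n = 1) :
    DihedralGroup n →* G where
  toFun
    | r i => zmodPowersHom n (s * t) hst (.ofAdd i)
    | sr i => s * zmodPowersHom n (s * t) hst (.ofAdd i)
  map_one' := map_one _
  map_mul' := by
    set ρ := zmodPowersHom n (s * t) hst
    have conj (i : ZMod n) : ρ (.ofAdd i) * s = s * (ρ (.ofAdd i))⁻¹ := by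
      simpa only [map_inv, inv_inv] using (semiconjBy_zmodPowersHom_inv hst
        (semiconjBy_mul_inv_of_mul_self hs ht) (.ofAdd i)⁻¹).eq.symm
    have rotation_sub (i j : ZMod n) : ρ (.ofAdd (j - i)) = (ρ (.ofAdd i))⁻¹ * ρ (.ofAdd j) := by
      rw [sub_eq_neg_add, ofAdd_add, ofAdd_neg, map_mul, map_inv]
    rintro (i | i) (j | j)
    · exact map_mul ρ _ _
    · change s * ρ (.ofAdd (j - i)) = ρ (.ofAdd i) * (s * ρ (.ofAdd j))
      rw [rotation_sub, ← mul_assoc, ← mul_assoc, conj]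
    · change s * ρ (.ofAdd (i + j)) = s * ρ (.ofAdd i) * ρ (.ofAdd j)
      rw [ofAdd_add, map_mul, mul_assoc]
    · change ρ (.ofAdd (j - i)) = s * ρ (.ofAdd i) * (s * ρ (.ofAdd j))
      rw [rotation_sub, mul_assoc, ← mul_assoc (ρ _) s, conj, mul_assoc, ← mul_assoc s s, hs,
        one_mul]

variable {s t : G} (hs : s * s = 1) (ht : t * t = 1) (hst : (s * t) ^ n = 1)

theorem dihedralLift_sr_zero : dihedralLift n s t hs ht hst (sr 0) = s := by
  change s * zmodPowersHom n (s * t) hst 1 = s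
  rw [map_one, mul_one]

theorem dihedralLift_sr_one : dihedralLift n s t hs ht hst (sr 1) = t := by
  change s * zmodPowersHom n (s * t) hst (.ofAdd 1) = t
  rw [zmodPowersHom_ofAdd_one, ← mul_assoc, hs, one_mul]

theorem dihedral_monoidHom_ext {M : Type*} [Monoid M] {f g : DihedralGroup n →* M}
    (h₀ : f (sr 0) = g (sr 0)) (h₁ : f (sr 1) = g (sr 1)) : f = g := by
  let rotation : Multiplicative (ZMod n) →* DihedralGroup n :=
    { toFun := fun i => r i.toAdd
      map_one' := rfl
      map_mul' := fun _ _ => rfl }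
  have on_generator : f (r 1) = g (r 1) := by
    rw [← sub_zero (1 : ZMod n), ← sr_mul_sr, map_mul, map_mul, h₀, h₁]
  have on_rotations (i : ZMod n) : f (r i) = g (r i) :=
    DFunLike.congr_fun (zmod_monoidHom_ext (f := f.comp rotation) (g := g.comp rotation)
      on_generator) (.ofAdd i)
  ext (i | i)
  · exact on_rotations i
  · rw [← zero_add i, ← sr_mul_r, map_mul, map_mul, h₀, on_rotations]

end Dihedral

section FreeProduct

/-- The free product of two groups of order two, indexed by `Fin 2`. -/
abbrev FreeProductTwoTwo : Type := CoprodI fun _ : Fin 2 => Multiplicative (ZMod 2)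

namespace FreeProductTwoTwo

/-- The generator of the `i`-th factor. -/
def involution (i : Fin 2) : FreeProductTwoTwo := CoprodI.of (i := i) (.ofAdd 1)

theorem involution_mul_self (i : Fin 2) : involution i * involution i = 1 := by
  rw [involution, ← map_mul]
  exact map_one _

/-- The homomorphism to the infinite dihedral group that sends the generators of the factors to the
reflections `sr 0` and `sr 1`. -/
def toDihedral : FreeProductTwoTwo →* DihedralGroup 0 :=
  CoprodI.lift fun i => zmodPowersHom 2 (sr (i.val : ZMod 0)) (by rw [pow_two, sr_mul_self])

/-- The inverse of `FreeProductTwoTwo.toDihedral`. -/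
def ofDihedral : DihedralGroup 0 →* FreeProductTwoTwo :=
  dihedralLift 0 (involution 0) (involution 1) (involution_mul_self 0) (involution_mul_self 1)
    (pow_zero _)

theorem toDihedral_involution (i : Fin 2) : toDihedral (involution i) = sr (i.val : ZMod 0) := by
  rw [toDihedral, involution, CoprodI.lift_of, zmodPowersHom_ofAdd_one]

theorem ofDihedral_sr (i : Fin 2) : ofDihedral (sr (i.val : ZMod 0)) = involution i := by
  fin_cases i
  · exact dihedralLift_sr_zero ..
  · exact dihedralLift_sr_one ..

theorem ofDihedral_comp_toDihedral : ofDihedral.comp toDihedral = .id _ :=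
  CoprodI.ext_hom _ _ fun i => zmod_monoidHom_ext <|
    (congrArg ofDihedral (toDihedral_involution i)).trans (ofDihedral_sr i)

theorem toDihedral_comp_ofDihedral : toDihedral.comp ofDihedral = .id _ :=
  dihedral_monoidHom_ext
    ((congrArg toDihedral (ofDihedral_sr 0)).trans (toDihedral_involution 0))
    ((congrArg toDihedral (ofDihedral_sr 1)).trans (toDihedral_involution 1))

/-- The free product of two groups of order two is the infinite dihedral group. -/
def dihedralEquiv : FreeProductTwoTwo ≃* DihedralGroup 0 :=
  toDihedral.toMulEquiv ofDihedral ofDihedral_comp_toDihedral toDihedral_comp_ofDihedral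

end FreeProductTwoTwo

end FreeProduct

section Pushout

theorem prod_monoidHom_ext {M N P : Type*} [MulOneClass M] [MulOneClass N] [Monoid P]
    {f g : M × N →* P} (hl : f.comp (.inl M N) = g.comp (.inl M N))
    (hr : f.comp (.inr M N) = g.comp (.inr M N)) : f = g := by
  rw [← MonoidHom.noncommCoprod_unique f, ← MonoidHom.noncommCoprod_unique g]
  simp only [hl, hr]

variable {ι : Type*} (M : Type*) [Monoid M] (N : ι → Type*) [∀ i, Monoid (N i)]

/-- The pushout of the inclusions `M → M × N i`. -/
abbrev InlPushout : Type _ := PushoutI fun i => MonoidHom.inl M (N i)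

namespace InlPushout

/-- The inclusion of the amalgamated factor `M`. -/
def inl : M →* InlPushout M N := PushoutI.base _

/-- The homomorphism from the free product assembled from the inclusions of the second factors
`N i`. -/
def inr : CoprodI N →* InlPushout M N :=
  CoprodI.lift fun i => (PushoutI.of i).comp (.inr M (N i))

theorem commute_inl_inr (m : M) (x : CoprodI N) : Commute (inl M N m) (inr M N x) := by
  induction x using CoprodI.induction_on with
  | one => exact map_one (inr M N) ▸ Commute.one_right _
  | of i y =>
    rw [inr, CoprodI.lift_of, inl, ← PushoutI.of_apply_eq_base _ i]
    exact (MonoidHom.commute_inl_inr m y).map (PushoutI.of (φ := fun i => .inl M (N i)) i)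
  | mul x y hx hy => exact map_mul (inr M N) x y ▸ hx.mul_right hy

/-- The comparison map to the product, induced by `M × N i → M × CoprodI N`. -/
def toProd : InlPushout M N →* M × CoprodI N :=
  PushoutI.lift (fun _ => (MonoidHom.id M).prodMap CoprodI.of) (.inl M (CoprodI N)) fun _ => by
    ext m : 1
    simp

/-- The inverse of `InlPushout.toProd`, defined since `M` commutes with every `N i`. -/
def ofProd : M × CoprodI N →* InlPushout M N :=
  (inl M N).noncommCoprod (inr M N) (commute_inl_inr M N)

theorem toProd_comp_inl : (toProd M N).comp (inl M N) = .inl M (CoprodI N) := by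
  ext m : 1
  simp [toProd, inl]

theorem toProd_comp_inr : (toProd M N).comp (inr M N) = .inr M (CoprodI N) := by
  ext i y : 2
  simp [toProd, inr]

theorem toProd_comp_ofProd : (toProd M N).comp (ofProd M N) = .id _ := by
  apply prod_monoidHom_ext
  · rw [MonoidHom.comp_assoc, ofProd, MonoidHom.noncommCoprod_comp_inl, toProd_comp_inl,
      MonoidHom.id_comp]
  · rw [MonoidHom.comp_assoc, ofProd, MonoidHom.noncommCoprod_comp_inr, toProd_comp_inr,
      MonoidHom.id_comp]

theorem ofProd_comp_toProd : (ofProd M N).comp (toProd M N) = .id _ := by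
  refine PushoutI.hom_ext (fun i => prod_monoidHom_ext ?_ ?_) ?_
  all_goals ext x : 1
  · simp [toProd, ofProd, inl, ← PushoutI.of_apply_eq_base _ i]
  · simp [toProd, ofProd, inr]
  · simp [toProd, ofProd, inl]

/-- The pushout of the inclusions `M → M × N i` is the product of `M` with the free product of the
`N i`. -/
def prodEquiv : InlPushout M N ≃* M × CoprodI N :=
  (toProd M N).toMulEquiv (ofProd M N) (ofProd_comp_toProd M N) (toProd_comp_ofProd M N)

end InlPushout

end Pushout

theorem pushout_D10_amalg_D5_iso_general (M : Type*) [Monoid M] :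
    Nonempty
      (PushoutI (fun _ : Fin 2 => MonoidHom.inl M (Multiplicative (ZMod 2))) ≃*
        M × DihedralGroup 0) :=
  ⟨(InlPushout.prodEquiv M _).trans ((MulEquiv.refl M).prodCongr FreeProductTwoTwo.dihedralEquiv)⟩

/-- `D_{10} *_{D_5} D_{10} ≅ D_5 × D_∞`: the pushout of two copies of the
inclusion `D_5 → D_5 × ℤ/2 ≅ D_{10}` into the first factor, amalgamated along `D_5`, is
isomorphic to the direct product of `D_5` with the infinite dihedral group `D_∞`. -/
theorem pushout_D10_amalg_D5_iso :
    Nonempty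
      (Monoid.PushoutI
          (fun _ : Fin 2 =>
            MonoidHom.inl (DihedralGroup 5) (Multiplicative (ZMod 2))) ≃*
        DihedralGroup 5 × DihedralGroup 0) :=
  pushout_D10_amalg_D5_iso_general (DihedralGroup 5)
end

section
/- Inside the group A_5 × ℤ/2, every subgroup isomorphic to the dihedral group D_5 (of order 10) is contained in a subgroup isomorphic to the dihedral group D_{10} (of order 20). -/
/-!
Adjoin a central involution `z` of the ambient group, such as the generator of the factor `ℤ/2` of
`A_5 × ℤ/2`. For odd `n ≠ 1` the group `D_n` has trivial center, so a subgroup `H ≃ D_n` meets the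
central subgroup `⟨z⟩` trivially. Hence `H ⊔ ⟨z⟩` is the internal direct product
`H × ⟨z⟩ ≃ D_n × ℤ/2`, which the Chinese remainder theorem `ℤ/2n ≃ ℤ/2 × ℤ/n` identifies with
`D_{2n}`.
-/

open Subgroup

section CentralSubgroup

variable {G : Type*} [Group G] {H C : Subgroup G}

/-- The internal direct product: two disjoint subgroups that centralize each other generate a
subgroup isomorphic to their product, through `(h, c) ↦ h * c`. -/
noncomputable def prodMulEquivSup (hcomm : C ≤ centralizer H) (hdisj : Disjoint H C) :
    H × C ≃* (H ⊔ C : Subgroup G) :=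
  have comm (h : H) (c : C) : Commute (H.subtype h) (C.subtype c) :=
    mem_centralizer_iff.mp (hcomm c.2) h h.2
  have injective : Function.Injective (H.subtype.noncommCoprod C.subtype comm) := by
    rw [MonoidHom.noncommCoprod_injective, range_subtype, range_subtype]
    exact ⟨H.subtype_injective, C.subtype_injective, hdisj⟩
  (MonoidHom.ofInjective injective).trans <| MulEquiv.subgroupCongr <| by
    rw [MonoidHom.noncommCoprod_range, range_subtype, range_subtype]

theorem disjoint_of_le_center_of_center_eq_bot (hC : C ≤ center G) (hH : center H = ⊥) :
    Disjoint H C := by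
  refine disjoint_def.mpr fun {x} hxH hxC ↦ ?_
  have hx : (⟨x, hxH⟩ : H) ∈ center H :=
    mem_center_iff.mpr fun h ↦ Subtype.ext (mem_center_iff.mp (hC hxC) h)
  rw [hH, mem_bot] at hx
  exact congrArg Subtype.val hx

theorem center_eq_bot_of_mulEquiv {K : Type*} [Group K] (e : G ≃* K) (hK : center K = ⊥) :
    center G = ⊥ := by
  have : Subsingleton (center K) := by rw [hK]; infer_instance
  have : Subsingleton (center G) := (centerCongr e).toEquiv.subsingleton
  exact eq_bot_of_subsingleton (center G)

end CentralSubgroup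

/-- The splitting `D_{2n} ≃ D_n × ℤ/2` for odd `n`: both coordinates of the Chinese remainder
isomorphism `ℤ/2n ≃ ℤ/2 × ℤ/n` are read off the index of a rotation or reflection. -/
def dihedralTwoMulEquivProd {n : ℕ} (hn : Odd n) :
    DihedralGroup (2 * n) ≃* DihedralGroup n × Multiplicative (ZMod 2) :=
  let crt := ZMod.chineseRemainder (Nat.coprime_two_left.mpr hn)
  { toFun
      | .r i => (.r (crt i).2, .ofAdd (crt i).1)
      | .sr i => (.sr (crt i).2, .ofAdd (crt i).1)
    invFun
      | (.r j, t) => .r (crt.symm (t.toAdd, j))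
      | (.sr j, t) => .sr (crt.symm (t.toAdd, j))
    left_inv := by rintro (i | i) <;> simp
    right_inv := by rintro ⟨j | j, t⟩ <;> simp
    -- A reflection on the right subtracts indices; in `ℤ/2` this agrees with adding them.
    map_mul' := by
      rintro (i | i) (j | j) <;> simp [← ofAdd_add, CharTwo.sub_eq_add, add_comm] }

theorem D5_subgroup_le_D10_subgroup_general {G : Type*} [Group G] {z : G} (hz : z ∈ center G)
    (hz2 : orderOf z = 2) {n : ℕ} (hn : Odd n) (hn1 : n ≠ 1) (H : Subgroup G)
    (hH : Nonempty (H ≃* DihedralGroup n)) :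
    ∃ K : Subgroup G, H ≤ K ∧ Nonempty (K ≃* DihedralGroup (2 * n)) := by
  obtain ⟨e⟩ := hH
  have hzC : zpowers z ≤ center G := zpowers_le.mpr hz
  have hdisj : Disjoint H (zpowers z) := disjoint_of_le_center_of_center_eq_bot hzC <|
    center_eq_bot_of_mulEquiv e (DihedralGroup.center_eq_bot_of_odd_ne_one hn hn1)
  have ez : zpowers z ≃* Multiplicative (ZMod 2) :=
    mulEquivOfPrimeCardEq (p := 2) (by rw [Nat.card_zpowers, hz2]) (by simp)
  exact ⟨H ⊔ zpowers z, le_sup_left,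
    ⟨(prodMulEquivSup (hzC.trans (center_le_centralizer _)) hdisj).symm.trans <|
      (e.prodCongr ez).trans (dihedralTwoMulEquivProd hn).symm⟩⟩

/-- Inside `A_5 × ℤ/2`, every subgroup isomorphic to `D_5` is contained in a
subgroup isomorphic to `D_{10}`. -/
theorem D5_subgroup_le_D10_subgroup
    (H : Subgroup (alternatingGroup (Fin 5) × Multiplicative (ZMod 2)))
    (hH : Nonempty (H ≃* DihedralGroup 5)) :
    ∃ K : Subgroup (alternatingGroup (Fin 5) × Multiplicative (ZMod 2)),
      H ≤ K ∧ Nonempty (K ≃* DihedralGroup 10) :=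
  D5_subgroup_le_D10_subgroup_general (z := (1, .ofAdd 1))
    (by simp [Subgroup.center_prod, mem_prod, CommGroup.center_eq_top])
    (orderOf_eq_prime rfl (by simp)) (by decide) (by decide) H hH
end

section
/- Inside the group A_5 × ℤ/2, any two subgroups isomorphic to the dihedral group D_{10} (of order 20) are conjugate to each other. -/
/-!
A subgroup of order `20` has a unique Sylow `5`-subgroup, which is also Sylow in `A_5 × ℤ/2`
because the index `6` is prime to `5`; so the subgroup lies in the normalizer of that Sylow
subgroup. As `A_5` is simple, `A_5 × ℤ/2` has several Sylow `5`-subgroups, hence at least six by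
Sylow's congruence, so this normalizer has index at least `6` and equals the subgroup. Sylow
subgroups are conjugate, and therefore so are their normalizers.
-/

open Subgroup

section SylowCounting

variable {p : ℕ} [Fact p.Prime] {G : Type*} [Group G]

theorem add_one_le_card_sylow [Finite (Sylow p G)] [Nontrivial (Sylow p G)] :
    p + 1 ≤ Nat.card (Sylow p G) := by
  have one_lt_card : 1 < Nat.card (Sylow p G) := Finite.one_lt_card
  have dvd_card_sub_one : p ∣ Nat.card (Sylow p G) - 1 :=
    (Nat.modEq_iff_dvd' one_lt_card.le).mp (card_sylow_modEq_one p G).symm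
  have := Nat.le_of_dvd (Nat.sub_pos_of_lt one_lt_card) dvd_card_sub_one
  lia

theorem subsingleton_sylow_of_index_le (P : Sylow p G) [P.FiniteIndex] (hP : P.index ≤ p) :
    Subsingleton (Sylow p G) := by
  have := P.finite_of_finiteIndex
  by_contra hsub
  have := not_subsingleton_iff_nontrivial.mp hsub
  have card_le_index : Nat.card (Sylow p G) ≤ P.index :=
    Nat.le_of_dvd (Nat.pos_of_ne_zero FiniteIndex.index_ne_zero) P.card_dvd_index
  have := add_one_le_card_sylow (p := p) (G := G)
  lia

theorem subsingleton_sylow_of_card_le_sq [Finite G] (hdvd : p ∣ Nat.card G)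
    (hle : Nat.card G ≤ p ^ 2) : Subsingleton (Sylow p G) := by
  obtain ⟨P⟩ : Nonempty (Sylow p G) := inferInstance
  have le_card : p ≤ Nat.card P := Nat.le_of_dvd Nat.card_pos (P.dvd_card_of_dvd_card hdvd)
  refine subsingleton_sylow_of_index_le P (Nat.le_of_mul_le_mul_left ?_ (Fact.out : p.Prime).pos)
  calc p * P.index ≤ Nat.card P * P.index := Nat.mul_le_mul_right _ le_card
    _ = Nat.card G := P.card_mul_index
    _ ≤ p * p := by rwa [← sq]

theorem nontrivial_sylow_of_isSimpleGroup [Finite G] [IsSimpleGroup G] (hdvd : p ∣ Nat.card G)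
    (hG : ¬ IsPGroup p G) : Nontrivial (Sylow p G) := by
  by_contra hnontrivial
  have := not_nontrivial_iff_subsingleton.mp hnontrivial
  obtain ⟨P⟩ : Nonempty (Sylow p G) := inferInstance
  rcases P.normal_of_subsingleton.eq_bot_or_eq_top with hbot | htop
  · exact P.ne_bot_of_dvd_card hdvd hbot
  · exact hG ((htop ▸ P.isPGroup').of_equiv topEquiv)

theorem nontrivial_sylow_of_surjective [Finite G] {S : Type*} [Group S] {f : G →* S}
    (hf : Function.Surjective f) [Nontrivial (Sylow p S)] : Nontrivial (Sylow p G) :=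
  (Sylow.mapSurjective_surjective hf p).nontrivial

end SylowCounting

section SylowNormalizers

variable {p : ℕ} [Fact p.Prime] {G : Type*} [Group G]

theorem exists_sylow_le_normalizer [Finite G] {H : Subgroup G} [Subsingleton (Sylow p H)]
    (hH : ¬ p ∣ H.index) : ∃ P : Sylow p G, H ≤ normalizer (P : Set G) := by
  obtain ⟨Q⟩ : Nonempty (Sylow p H) := inferInstance
  have not_dvd_index_map : ¬ p ∣ (Q.map H.subtype).index := by
    rw [index_map_subtype]
    exact (Fact.out : p.Prime).not_dvd_mul Q.not_dvd_index hH
  refine ⟨(Q.isPGroup'.map H.subtype).toSylow not_dvd_index_map, ?_⟩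
  have normalizer_eq_top : normalizer (Q : Set H) = ⊤ :=
    normalizer_eq_top_iff.mpr Q.normal_of_subsingleton
  calc H = (normalizer (Q : Set H)).map H.subtype := by
        rw [normalizer_eq_top, ← MonoidHom.range_eq_map, H.range_subtype]
    _ ≤ normalizer (Q.map H.subtype : Set G) := le_normalizer_map H.subtype

theorem exists_sylow_eq_normalizer_of_index_eq [Finite G] [Nontrivial (Sylow p G)]
    {H : Subgroup G} [Subsingleton (Sylow p H)] (hH : H.index = p + 1) :
    ∃ P : Sylow p G, H = normalizer (P : Set G) := by
  have not_dvd_index : ¬ p ∣ H.index := by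
    rw [hH, Nat.dvd_add_right dvd_rfl]
    exact (Fact.out : p.Prime).not_dvd_one
  obtain ⟨P, hle⟩ := exists_sylow_le_normalizer not_dvd_index
  refine ⟨P, hle.eq_of_not_lt fun hlt => ?_⟩
  have index_lt : (normalizer (P : Set G)).index < H.index := index_strictAnti hlt
  rw [hH, ← P.card_eq_index_normalizer] at index_lt
  exact index_lt.not_ge add_one_le_card_sylow

theorem exists_map_conj_normalizer_sylow_eq [Finite (Sylow p G)] (P Q : Sylow p G) :
    ∃ g : G, (normalizer (P : Set G)).map (MulAut.conj g).toMonoidHom =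
      normalizer (Q : Set G) := by
  obtain ⟨g, rfl⟩ := MulAction.exists_smul_eq G P Q
  exact ⟨g, map_equiv_normalizer_eq (P : Subgroup G) (MulAut.conj g)⟩

theorem exists_map_conj_eq_of_index_eq [Finite G] [Nontrivial (Sylow p G)] {H K : Subgroup G}
    [Subsingleton (Sylow p H)] [Subsingleton (Sylow p K)]
    (hH : H.index = p + 1) (hK : K.index = p + 1) :
    ∃ g : G, H.map (MulAut.conj g).toMonoidHom = K := by
  obtain ⟨P, rfl⟩ := exists_sylow_eq_normalizer_of_index_eq hH
  obtain ⟨Q, rfl⟩ := exists_sylow_eq_normalizer_of_index_eq hK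
  exact exists_map_conj_normalizer_sylow_eq P Q

end SylowNormalizers

theorem card_alternatingGroup_five : Nat.card (alternatingGroup (Fin 5)) = 60 := by
  rw [nat_card_alternatingGroup, Nat.card_fin]
  rfl

theorem nontrivial_sylow_five_alternatingGroup_five :
    Nontrivial (Sylow 5 (alternatingGroup (Fin 5))) := by
  have : Fact (Nat.Prime 5) := ⟨Nat.prime_five⟩
  have : IsSimpleGroup (alternatingGroup (Fin 5)) := alternatingGroup.isSimpleGroup (by simp)
  have five_dvd_card : 5 ∣ Nat.card (alternatingGroup (Fin 5)) := by
    rw [card_alternatingGroup_five]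
    norm_num
  refine nontrivial_sylow_of_isSimpleGroup five_dvd_card fun hA => ?_
  obtain ⟨n, hn⟩ := hA.exists_card_eq
  have two_dvd_five_pow : 2 ∣ 5 ^ n := by
    rw [← hn, card_alternatingGroup_five]
    norm_num
  exact absurd (Nat.prime_two.dvd_of_dvd_pow two_dvd_five_pow) (by norm_num)

theorem D10_subgroups_conjugate_general
    (H K : Subgroup (alternatingGroup (Fin 5) × Multiplicative (ZMod 2)))
    (hH : Nat.card H = 20) (hK : Nat.card K = 20) :
    ∃ g : alternatingGroup (Fin 5) × Multiplicative (ZMod 2),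
      Subgroup.map (MulAut.conj g).toMonoidHom H = K := by
  have : Fact (Nat.Prime 5) := ⟨Nat.prime_five⟩
  have := nontrivial_sylow_five_alternatingGroup_five
  have : Nontrivial (Sylow 5 (alternatingGroup (Fin 5) × Multiplicative (ZMod 2))) :=
    nontrivial_sylow_of_surjective (f := MonoidHom.fst _ _) Prod.fst_surjective
  have subsingleton_sylow {L : Subgroup (alternatingGroup (Fin 5) × Multiplicative (ZMod 2))}
      (hL : Nat.card L = 20) : Subsingleton (Sylow 5 L) :=
    subsingleton_sylow_of_card_le_sq (by norm_num [hL]) (by norm_num [hL])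
  have index_eq {L : Subgroup (alternatingGroup (Fin 5) × Multiplicative (ZMod 2))}
      (hL : Nat.card L = 20) : L.index = 5 + 1 := by
    have card_mul_index := L.card_mul_index
    rw [hL, Nat.card_prod, card_alternatingGroup_five,
      Nat.card_congr Multiplicative.toAdd, Nat.card_zmod] at card_mul_index
    lia
  have := subsingleton_sylow hH
  have := subsingleton_sylow hK
  exact exists_map_conj_eq_of_index_eq (index_eq hH) (index_eq hK)

/-- Inside `A_5 × ℤ/2`, any two subgroups isomorphic to `D_{10}` are conjugate. -/
theorem D10_subgroups_conjugate
    (H K : Subgroup (alternatingGroup (Fin 5) × Multiplicative (ZMod 2)))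
    (hH : Nonempty (H ≃* DihedralGroup 10))
    (hK : Nonempty (K ≃* DihedralGroup 10)) :
    ∃ g : alternatingGroup (Fin 5) × Multiplicative (ZMod 2),
      Subgroup.map (MulAut.conj g).toMonoidHom H = K :=
  D10_subgroups_conjugate_general H K
    ((Nat.card_congr hH.some.toEquiv).trans DihedralGroup.nat_card)
    ((Nat.card_congr hK.some.toEquiv).trans DihedralGroup.nat_card)
end

section
/- Every hyper-elementary subgroup of the alternating group A_5 is isomorphic to a subgroup of one of the following three groups: the Klein four-group ℤ/2 × ℤ/2, the dihedral group D_3 of order 6, or the dihedral group D_5 of order 10. -/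
/-- A finite group is hyper-elementary if it has a cyclic normal subgroup `C` such that the
quotient by `C` is a `p`-group for some prime `p` not dividing the order of `C`. -/
def IsHyperElementary (G : Type*) [Group G] : Prop :=
  ∃ C : Subgroup G, ∃ hN : C.Normal, IsCyclic C ∧
    ∃ p : ℕ, p.Prime ∧ ¬ p ∣ Nat.card C ∧
      @IsPGroup p (G ⧸ C) (@QuotientGroup.Quotient.group G _ C hN)

/-!
A nontrivial hyper-elementary group contains a nontrivial cyclic normal subgroup: either the given
one, or, when that is trivial, one inside the nontrivial center of a `p`-group. For `H ≤ A₅` let `c`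
generate such a subgroup. Nontrivial elements of `A₅` have prime order, and this together with
`|A₅| = 60` is all that is used about `A₅`:

* `c` has order `p ∈ {2, 3, 5}`, and an element commuting with `c` has `p`-th power `1`, since
  otherwise its product with `c` would have composite order;
* conjugation by an element of `H` acts on `⟨c⟩` through an element of `(ℤ/p)ˣ` whose order
  divides both a prime and `p - 1 ∈ {1, 2, 4}`, so it sends `c` to `c` or to `c⁻¹`.

If `p = 2` then `c` is central, so `H` is elementary abelian of order at most `4`. If `p` is odd
then `p²` does not divide `60`, so `c` generates its own centralizer and `H` is cyclic of order `p`
or dihedral of order `2p`.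
-/

section ElementaryAbelian

theorem exists_injective_linearMap_of_natCard_le {K V W : Type*} [Field K] [Finite K]
    [AddCommGroup V] [Module K V] [Finite V] [AddCommGroup W] [Module K W] [Finite W]
    (hcard : Nat.card V ≤ Nat.card W) : ∃ f : V →ₗ[K] W, Function.Injective f := by
  rw [Module.natCard_eq_pow_finrank (K := K) (V := V),
    Module.natCard_eq_pow_finrank (K := K) (V := W),
    Nat.pow_le_pow_iff_right Finite.one_lt_card] at hcard
  exact finrank_le_iff_exists_linearMap.mp hcard

theorem exists_injective_monoidHom_of_pow_prime_eq_one {A B : Type*} [CommGroup A] [CommGroup B]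
    [Finite A] [Finite B] {p : ℕ} [Fact p.Prime] (hA : ∀ a : A, a ^ p = 1)
    (hB : ∀ b : B, b ^ p = 1) (hcard : Nat.card A ≤ Nat.card B) :
    ∃ f : A →* B, Function.Injective f := by
  have : Module (ZMod p) (Additive A) := AddCommGroup.zmodModule hA
  have : Module (ZMod p) (Additive B) := AddCommGroup.zmodModule hB
  obtain ⟨f, hf⟩ := exists_injective_linearMap_of_natCard_le (K := ZMod p) (V := Additive A)
    (W := Additive B) hcard
  exact ⟨f.toAddMonoidHom.toMultiplicative, hf⟩

theorem exists_injective_zmod_two_prod_of_sq_eq_one {G : Type*} [Group G] [Finite G]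
    (hsq : ∀ g : G, g ^ 2 = 1) (hcard : ¬ 8 ∣ Nat.card G) :
    ∃ f : G →* Multiplicative (ZMod 2) × Multiplicative (ZMod 2), Function.Injective f := by
  have hinv (g : G) : g⁻¹ = g := inv_eq_of_mul_eq_one_right (by rw [← sq, hsq])
  let : CommGroup G :=
    { mul_comm := fun a b => by rw [← hinv (a * b), mul_inv_rev, hinv, hinv] }
  obtain ⟨k, hk⟩ := (IsPGroup.iff_card (p := 2)).mp fun g : G => ⟨1, by simpa using hsq g⟩
  have hk_le : k ≤ 2 := by
    by_contra! h
    exact hcard (hk ▸ pow_dvd_pow 2 h)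
  refine exists_injective_monoidHom_of_pow_prime_eq_one (p := 2) hsq ?_ ?_
  · decide
  · calc Nat.card G = 2 ^ k := hk
      _ ≤ 2 ^ 2 := Nat.pow_le_pow_right two_pos hk_le
      _ = Nat.card (Multiplicative (ZMod 2) × Multiplicative (ZMod 2)) := by
        simp

end ElementaryAbelian

section Dihedral

variable {G : Type*} [Group G] {n : ℕ} {c t : G}

theorem zpow_cast_intCast_zmod (hc : c ^ n = 1) (k : ℤ) : c ^ ((k : ZMod n).cast : ℤ) = c ^ k := by
  rw [ZMod.coe_intCast, ← zpow_eq_zpow_emod k (by exact_mod_cast hc)]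

theorem mul_zpow_eq_zpow_neg_mul (hct : t * c * t⁻¹ = c⁻¹) (k : ℤ) : t * c ^ k = c ^ (-k) * t := by
  rw [zpow_neg, ← inv_zpow, ← hct, conj_zpow, inv_mul_cancel_right]

/-- The universal property of the dihedral group: the homomorphism sending the rotation `r 1` to `c`
and the reflection `sr 0` to `t`, for `c` and `t` satisfying the dihedral relations. -/
def dihedralGroupLift (hc : c ^ n = 1) (ht : t ^ 2 = 1) (hct : t * c * t⁻¹ = c⁻¹) :
    DihedralGroup n →* G :=
  MonoidHom.mk'
    (fun
      | .r i => c ^ (i.cast : ℤ)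
      | .sr i => t * c ^ (i.cast : ℤ))
    (by
      have ht_mul : t * t = 1 := by rw [← sq, ht]
      have hcast := zpow_cast_intCast_zmod hc
      have hswap := mul_zpow_eq_zpow_neg_mul hct
      rintro (i | i) (j | j) <;>
        obtain ⟨i, rfl⟩ := ZMod.intCast_surjective i <;>
        obtain ⟨j, rfl⟩ := ZMod.intCast_surjective j
      · simp only [DihedralGroup.r_mul_r, ← Int.cast_add, hcast, zpow_add]
      · simp only [DihedralGroup.r_mul_sr, ← Int.cast_sub, hcast]
        rw [hswap, hswap, ← mul_assoc, ← zpow_add]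
        congr 2; ring
      · simp only [DihedralGroup.sr_mul_r, ← Int.cast_add, hcast, zpow_add, mul_assoc]
      · simp only [DihedralGroup.sr_mul_sr, ← Int.cast_sub, hcast]
        rw [hswap i, mul_assoc, ← mul_assoc t, ht_mul, one_mul, ← zpow_add]
        congr 1; ring)

theorem dihedralGroupLift_injective (hc : c ^ n = 1) (ht : t ^ 2 = 1) (hct : t * c * t⁻¹ = c⁻¹)
    (hn : orderOf c = n) (hcomm : ¬ Commute t c) :
    Function.Injective (dihedralGroupLift hc ht hct) := by
  rw [injective_iff_map_eq_one]
  rintro (i | i) hi <;> obtain ⟨i, rfl⟩ := ZMod.intCast_surjective i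
  · have hci : c ^ i = 1 := (zpow_cast_intCast_zmod hc i).symm.trans hi
    rw [← orderOf_dvd_iff_zpow_eq_one, hn] at hci
    rw [(ZMod.intCast_zmod_eq_zero_iff_dvd i n).mpr hci, DihedralGroup.r_zero]
  · have htc : t = (c ^ ((i : ZMod n).cast : ℤ))⁻¹ := eq_inv_of_mul_eq_one_left hi
    exact absurd (htc ▸ ((Commute.refl c).zpow_left _).inv_left) hcomm

theorem sq_eq_one_of_conj_eq_inv (hn : Odd (orderOf c)) (ht : t ^ 2 ∈ Subgroup.zpowers c)
    (hct : t * c * t⁻¹ = c⁻¹) : t ^ 2 = 1 := by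
  obtain ⟨k, hk⟩ := Subgroup.mem_zpowers_iff.mp ht
  have hinv : t ^ 2 = (t ^ 2)⁻¹ := by
    calc t ^ 2 = t * t ^ 2 * t⁻¹ := by group
      _ = (t ^ 2)⁻¹ := by rw [← hk, mul_zpow_eq_zpow_neg_mul hct, mul_inv_cancel_right, zpow_neg]
  have htwo : orderOf (t ^ 2) ∣ 2 :=
    orderOf_dvd_of_pow_eq_one (by rw [sq, mul_eq_one_iff_eq_inv, ← hinv])
  have hodd : orderOf (t ^ 2) ∣ orderOf c := orderOf_dvd_of_mem_zpowers ht
  exact orderOf_eq_one_iff.mp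
    (Nat.eq_one_of_dvd_coprimes (Nat.coprime_two_left.mpr hn) htwo hodd)

theorem exists_injective_dihedralGroup_of_generator (hc : orderOf c = n)
    (hgen : ∀ g, g ∈ Subgroup.zpowers c) : ∃ f : G →* DihedralGroup n, Function.Injective f := by
  let rotation : Multiplicative (ZMod n) →* DihedralGroup n :=
    MonoidHom.mk' (fun i => .r i.toAdd) fun i j => (DihedralGroup.r_mul_r _ _).symm
  have hrotation : Function.Injective rotation := fun i j hij => DihedralGroup.r.inj hij
  have hcard : Nat.card G = n := (orderOf_eq_card_of_forall_mem_zpowers hgen).symm.trans hc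
  let e := (zmodMulEquivOfGenerator hgen hcard).symm
  exact ⟨rotation.comp e.toMonoidHom, hrotation.comp e.injective⟩

theorem exists_injective_dihedralGroup_of_conj_eq_or_eq_inv (hn : Odd n) (hc : orderOf c = n)
    (hcent : ∀ g, Commute g c → g ∈ Subgroup.zpowers c)
    (hconj : ∀ g, g * c * g⁻¹ = c ∨ g * c * g⁻¹ = c⁻¹) :
    ∃ f : G →* DihedralGroup n, Function.Injective f := by
  by_cases hcomm : ∀ g, Commute g c
  · exact exists_injective_dihedralGroup_of_generator hc fun g => hcent g (hcomm g)
  push Not at hcomm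
  obtain ⟨t, htc⟩ := hcomm
  have conj_eq_inv {g : G} (hg : ¬ Commute g c) : g * c * g⁻¹ = c⁻¹ :=
    (hconj g).resolve_left fun h => hg (mul_inv_eq_iff_eq_mul.mp h)
  have hct := conj_eq_inv htc
  -- Two elements inverting `c` differ by an element commuting with `c`.
  have mul_mem {g : G} (hg : ¬ Commute g c) : t * g ∈ Subgroup.zpowers c := by
    refine hcent _ (mul_inv_eq_iff_eq_mul.mp ?_)
    calc t * g * c * (t * g)⁻¹ = t * (g * c * g⁻¹) * t⁻¹ := by group
      _ = c := by rw [conj_eq_inv hg, ← conj_inv, hct, inv_inv]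
  have ht : t ^ 2 = 1 := sq_eq_one_of_conj_eq_inv (hc ▸ hn) (sq t ▸ mul_mem htc) hct
  have hcn : c ^ n = 1 := hc ▸ pow_orderOf_eq_one c
  have hsurj : Function.Surjective (dihedralGroupLift hcn ht hct) := by
    intro g
    by_cases hg : Commute g c
    · obtain ⟨k, rfl⟩ := Subgroup.mem_zpowers_iff.mp (hcent g hg)
      exact ⟨.r k, zpow_cast_intCast_zmod hcn k⟩
    · obtain ⟨k, hk⟩ := Subgroup.mem_zpowers_iff.mp (mul_mem hg)
      refine ⟨.sr k, ?_⟩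
      calc t * c ^ ((k : ZMod n).cast : ℤ) = t ^ 2 * g := by
            rw [zpow_cast_intCast_zmod hcn, hk, sq, mul_assoc]
        _ = g := by rw [ht, one_mul]
  let e := (MulEquiv.ofBijective _ ⟨dihedralGroupLift_injective hcn ht hct hc htc, hsurj⟩).symm
  exact ⟨e.toMonoidHom, e.injective⟩

end Dihedral

section PrimeOrders

variable {G : Type*} [Group G] {c g : G}

theorem pow_orderOf_eq_one_of_commute (hG : ∀ x : G, x ≠ 1 → (orderOf x).Prime) (hc : c ≠ 1)
    (hg : Commute g c) : g ^ orderOf c = 1 := by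
  rcases eq_or_ne g 1 with rfl | hg_one
  · exact one_pow _
  rcases eq_or_ne (orderOf g) (orderOf c) with heq | hne
  · rw [← heq, pow_orderOf_eq_one]
  have hmul : orderOf (g * c) = orderOf g * orderOf c :=
    hg.orderOf_mul_eq_mul_orderOf_of_coprime
      ((Nat.coprime_primes (hG g hg_one) (hG c hc)).mpr hne)
  have hgc : ¬ (orderOf (g * c)).Prime :=
    hmul ▸ Nat.not_prime_mul (hG g hg_one).ne_one (hG c hc).ne_one
  have hgc_one : g * c = 1 := by_contra fun h => hgc (hG _ h)
  rw [eq_inv_of_mul_eq_one_left hgc_one, inv_pow, pow_orderOf_eq_one, inv_one]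

theorem mem_zpowers_of_commute [Finite G] (hG : ∀ x : G, x ≠ 1 → (orderOf x).Prime) (hc : c ≠ 1)
    (hcard : ¬ orderOf c ^ 2 ∣ Nat.card G) (hg : Commute g c) : g ∈ Subgroup.zpowers c := by
  have : Fact (orderOf c).Prime := ⟨hG c hc⟩
  let Z := Subgroup.centralizer {c}
  have hZ : IsPGroup (orderOf c) Z := fun x => ⟨1, Subtype.ext <| by
    simpa using pow_orderOf_eq_one_of_commute hG hc
      (Subgroup.mem_centralizer_singleton_iff.mp x.2)⟩
  obtain ⟨k, hk⟩ := IsPGroup.iff_card.mp hZ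
  have hk_le : k ≤ 1 := by
    by_contra! h
    exact hcard ((pow_dvd_pow _ h).trans (hk ▸ Z.card_subgroup_dvd_card))
  have hle : Subgroup.zpowers c ≤ Z :=
    Subgroup.zpowers_le.mpr (Subgroup.mem_centralizer_singleton_iff.mpr rfl)
  have hZ_eq : Subgroup.zpowers c = Z := Subgroup.eq_of_le_of_card_ge hle <| by
    calc Nat.card Z = orderOf c ^ k := hk
      _ ≤ orderOf c ^ 1 := Nat.pow_le_pow_right (orderOf_pos c) hk_le
      _ = Nat.card (Subgroup.zpowers c) := by rw [pow_one, Nat.card_zpowers]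
  exact hZ_eq ▸ Subgroup.mem_centralizer_singleton_iff.mpr hg

theorem conj_pow_eq_zpow_pow {k : ℤ} (h : g * c * g⁻¹ = c ^ k) (j : ℕ) :
    g ^ j * c * (g ^ j)⁻¹ = c ^ k ^ j := by
  induction j with
  | zero => simp
  | succ j ih =>
    calc g ^ (j + 1) * c * (g ^ (j + 1))⁻¹ = g * (g ^ j * c * (g ^ j)⁻¹) * g⁻¹ := by
          rw [pow_succ']; group
      _ = (c ^ k) ^ k ^ j := by rw [ih, ← conj_zpow, h]
      _ = c ^ k ^ (j + 1) := by rw [← zpow_mul, pow_succ']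

theorem sq_eq_one_of_pow_prime_eq_one {M : Type*} [Monoid M] {x : M} {q m : ℕ} (hq : q.Prime)
    (hxq : x ^ q = 1) (hxm : x ^ 2 ^ m = 1) : x ^ 2 = 1 := by
  rcases hq.eq_two_or_odd' with rfl | hodd
  · exact hxq
  · have hx : orderOf x = 1 :=
      Nat.eq_one_of_dvd_coprimes (Nat.Coprime.pow_right m (Nat.coprime_two_right.mpr hodd))
        (orderOf_dvd_of_pow_eq_one hxq) (orderOf_dvd_of_pow_eq_one hxm)
    rw [orderOf_eq_one_iff.mp hx, one_pow]

theorem conj_eq_or_eq_inv_of_normal_zpowers (hG : ∀ x : G, x ≠ 1 → (orderOf x).Prime)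
    (hnorm : (Subgroup.zpowers c).Normal) {m : ℕ} (hc : orderOf c = 2 ^ m + 1) (g : G) :
    g * c * g⁻¹ = c ∨ g * c * g⁻¹ = c⁻¹ := by
  rcases eq_or_ne g 1 with rfl | hg
  · simp
  have hc_one : c ≠ 1 := by
    rintro rfl
    simp at hc
  have : Fact (orderOf c).Prime := ⟨hG c hc_one⟩
  have zpow_eq_iff (a b : ℤ) : c ^ a = c ^ b ↔ (a : ZMod (orderOf c)) = b := by
    rw [zpow_eq_zpow_iff_modEq, ZMod.intCast_eq_intCast_iff]
  obtain ⟨k, hk⟩ := Subgroup.mem_zpowers_iff.mp (hnorm.conj_mem c (Subgroup.mem_zpowers c) g)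
  have hk_order : (k : ZMod (orderOf c)) ^ orderOf g = 1 := by
    have := conj_pow_eq_zpow_pow hk.symm (orderOf g)
    rw [pow_orderOf_eq_one, one_mul, inv_one, mul_one] at this
    simpa using ((zpow_eq_iff (k ^ orderOf g) 1).mp (by rw [← this, zpow_one]))
  have hk_fermat : (k : ZMod (orderOf c)) ^ 2 ^ m = 1 := by
    have hk_ne : (k : ZMod (orderOf c)) ≠ 0 :=
      ne_zero_pow (hG g hg).ne_zero (hk_order ▸ one_ne_zero)
    simpa [hc] using ZMod.pow_card_sub_one_eq_one hk_ne
  have hk_sq := sq_eq_one_of_pow_prime_eq_one (hG g hg) hk_order hk_fermat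
  rw [← hk]
  refine (sq_eq_one_iff.mp hk_sq).imp (fun h => ?_) fun h => ?_
  · simpa using (zpow_eq_iff k 1).mpr (by simpa using h)
  · simpa using (zpow_eq_iff k (-1)).mpr (by simpa using h)

theorem exists_injective_zmod_two_prod_of_normal_zpowers [Finite G]
    (hG : ∀ x : G, x ≠ 1 → (orderOf x).Prime) (hnorm : (Subgroup.zpowers c).Normal)
    (hc : orderOf c = 2) (hcard : ¬ 8 ∣ Nat.card G) :
    ∃ f : G →* Multiplicative (ZMod 2) × Multiplicative (ZMod 2), Function.Injective f := by
  have hc_one : c ≠ 1 := by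
    rintro rfl
    simp at hc
  have hc_inv : c⁻¹ = c := inv_eq_of_mul_eq_one_right (by rw [← sq, ← hc, pow_orderOf_eq_one])
  have hcentral (g : G) : Commute g c := by
    have := conj_eq_or_eq_inv_of_normal_zpowers hG hnorm (m := 0) hc g
    rw [hc_inv, or_self] at this
    exact mul_inv_eq_iff_eq_mul.mp this
  exact exists_injective_zmod_two_prod_of_sq_eq_one
    (fun g => hc ▸ pow_orderOf_eq_one_of_commute hG hc_one (hcentral g)) hcard

theorem exists_injective_dihedralGroup_of_normal_zpowers [Finite G]
    (hG : ∀ x : G, x ≠ 1 → (orderOf x).Prime) (hnorm : (Subgroup.zpowers c).Normal) {m : ℕ}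
    (hm : m ≠ 0) (hc : orderOf c = 2 ^ m + 1) (hcard : ¬ (2 ^ m + 1) ^ 2 ∣ Nat.card G) :
    ∃ f : G →* DihedralGroup (2 ^ m + 1), Function.Injective f := by
  have hc_one : c ≠ 1 := by
    rintro rfl
    simp at hc
  exact exists_injective_dihedralGroup_of_conj_eq_or_eq_inv
    ((even_two.pow_of_ne_zero hm).add_one) hc
    (fun _ hg => mem_zpowers_of_commute hG hc_one (hc ▸ hcard) hg)
    (conj_eq_or_eq_inv_of_normal_zpowers hG hnorm hc)

end PrimeOrders

theorem IsHyperElementary.exists_normal_zpowers {G : Type*} [Group G] [Finite G] [Nontrivial G]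
    (hG : IsHyperElementary G) : ∃ c : G, c ≠ 1 ∧ (Subgroup.zpowers c).Normal := by
  obtain ⟨C, hN, hcyc, p, hp, -, hquot⟩ := hG
  rcases eq_or_ne C ⊥ with rfl | hC
  · have : Fact p.Prime := ⟨hp⟩
    have hGp : IsPGroup p G := hquot.of_equiv QuotientGroup.quotientBot
    have := hGp.center_nontrivial
    obtain ⟨c, hc⟩ := exists_ne (1 : Subgroup.center G)
    have hle : Subgroup.zpowers (c : G) ≤ Subgroup.center G := Subgroup.zpowers_le.mpr c.2
    refine ⟨c, by simpa using hc, ⟨fun x hx g => ?_⟩⟩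
    rwa [Subgroup.mem_center_iff.mp (hle hx) g, mul_inv_cancel_right]
  · obtain ⟨c, rfl⟩ := (Subgroup.isCyclic_iff_exists_zpowers_eq_top C).mp hcyc
    exact ⟨c, by simpa using hC, hN⟩

theorem prime_orderOf_alternatingGroup_five {g : alternatingGroup (Fin 5)} (hg : g ≠ 1) :
    (orderOf g).Prime := by
  have hpow : ∀ x : Equiv.Perm (Fin 5), x.sign = 1 → x ^ 2 = 1 ∨ x ^ 3 = 1 ∨ x ^ 5 = 1 := by
    decide +kernel
  have hg' : (g : Equiv.Perm (Fin 5)) ≠ 1 := by simpa using hg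
  have : Fact (Nat.Prime 5) := ⟨Nat.prime_five⟩
  rw [← Subgroup.orderOf_coe]
  rcases hpow g (Equiv.Perm.mem_alternatingGroup.mp g.2) with h | h | h
  all_goals
    rw [orderOf_eq_prime h hg']
    exact Fact.out

theorem hyperelementary_subgroups_of_A5_general {G : Type*} [Group G] (hcard : Nat.card G ∣ 60)
    (hprime : ∀ g : G, g ≠ 1 → (orderOf g).Prime) (hG : IsHyperElementary G) :
    (∃ f : G →* Multiplicative (ZMod 2) × Multiplicative (ZMod 2), Function.Injective f) ∨
    (∃ f : G →* DihedralGroup 3, Function.Injective f) ∨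
    (∃ f : G →* DihedralGroup 5, Function.Injective f) := by
  have : Finite G := Nat.finite_of_card_ne_zero (ne_zero_of_dvd_ne_zero (by norm_num) hcard)
  rcases subsingleton_or_nontrivial G with _ | _
  · exact Or.inl ⟨1, Function.injective_of_subsingleton _⟩
  obtain ⟨c, hc, hnorm⟩ := hG.exists_normal_zpowers
  have horder : orderOf c = 2 ∨ orderOf c = 3 ∨ orderOf c = 5 := by
    have hmem : orderOf c ∈ Nat.primeFactors 60 :=
      Nat.mem_primeFactors.mpr ⟨hprime c hc, (orderOf_dvd_natCard c).trans hcard, by norm_num⟩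
    simpa [show Nat.primeFactors 60 = {2, 3, 5} by decide +kernel] using hmem
  have not_dvd {d : ℕ} (hd : ¬ d ∣ 60) : ¬ d ∣ Nat.card G := fun h => hd (h.trans hcard)
  refine horder.imp (fun h => ?_) (Or.imp (fun h => ?_) fun h => ?_)
  · exact exists_injective_zmod_two_prod_of_normal_zpowers hprime hnorm h (not_dvd (by norm_num))
  · exact exists_injective_dihedralGroup_of_normal_zpowers hprime hnorm (m := 1) one_ne_zero h
      (not_dvd (by norm_num))
  · exact exists_injective_dihedralGroup_of_normal_zpowers hprime hnorm (m := 2) two_ne_zero h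
      (not_dvd (by norm_num))

/-- Every hyper-elementary subgroup of `A_5` is isomorphic to a subgroup of
the Klein four-group `ℤ/2 × ℤ/2`, of `D_3`, or of `D_5`. -/
theorem hyperelementary_subgroups_of_A5
    (H : Subgroup (alternatingGroup (Fin 5))) (hH : IsHyperElementary H) :
    (∃ f : H →* Multiplicative (ZMod 2) × Multiplicative (ZMod 2), Function.Injective f) ∨
    (∃ f : H →* DihedralGroup 3, Function.Injective f) ∨
    (∃ f : H →* DihedralGroup 5, Function.Injective f) := by
  have hcard : Nat.card (alternatingGroup (Fin 5)) = 60 := by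
    rw [nat_card_alternatingGroup, Nat.card_fin]; rfl
  exact hyperelementary_subgroups_of_A5_general (hcard ▸ H.card_subgroup_dvd_card)
    (fun h hh => Subgroup.orderOf_coe h ▸
      prime_orderOf_alternatingGroup_five (by simpa using hh)) hH
end

section
/- In the dihedral group D_6 of order 12, the number of equivalence classes of elements under the relation 'x ≈ y if and only if y is conjugate to x or to x⁻¹' is equal to the number of conjugacy classes of cyclic subgroups (i.e., orbits of the conjugation action of D_6 on the set of its cyclic subgroups). (In the notation of the paper, r = q for D_6, so the Whitehead group Wh(D_6) has rank 0.) -/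
/-!
Sending `x` to `⟨x⟩` induces a surjection, in any group, from the classes of elements up to
conjugation and inversion onto the conjugacy classes of cyclic subgroups. It is injective as soon
as every generator of `⟨x⟩` is conjugate to `x` or to `x⁻¹`. The generators of `⟨x⟩` are the powers
`x ^ u` with `u` a unit modulo the order of `x`; in `D_6` this order divides `6`, and the only
units modulo a divisor of `6` are `±1`.
-/

theorem zmod_units_eq_one_or_neg_one_of_dvd {m n : ℕ} [NeZero n] (hmn : m ∣ n)
    (hn : ∀ u : (ZMod n)ˣ, u = 1 ∨ u = -1) (v : (ZMod m)ˣ) : v = 1 ∨ v = -1 := by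
  obtain ⟨u, rfl⟩ := ZMod.unitsMap_surjective hmn v
  refine (hn u).imp (fun h ↦ by rw [h, map_one]) fun h ↦ ?_
  ext
  simp [h, ZMod.unitsMap_def]

variable {G : Type*} [Group G]

theorem exists_zmod_unit_of_zpowers_eq {x y : G}
    (h : Subgroup.zpowers x = Subgroup.zpowers y) :
    ∃ (u : (ZMod (orderOf x))ˣ) (k : ℤ), (u : ZMod (orderOf x)) = k ∧ x ^ k = y := by
  obtain ⟨k, hk⟩ := Subgroup.mem_zpowers_iff.1 (h ▸ Subgroup.mem_zpowers y)
  obtain ⟨l, hl⟩ := Subgroup.mem_zpowers_iff.1 (h ▸ Subgroup.mem_zpowers x)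
  have hkl : (k : ZMod (orderOf x)) * l = 1 := by
    have hpow : x ^ (k * l) = x ^ (1 : ℤ) := by rw [zpow_mul, hk, hl, zpow_one]
    exact_mod_cast (ZMod.intCast_eq_intCast_iff _ _ _).2 (zpow_eq_zpow_iff_modEq.1 hpow)
  exact ⟨Units.mkOfMulEqOne _ _ hkl, k, rfl, hk⟩

theorem eq_or_inv_eq_of_zpowers_eq {x y : G}
    (hx : ∀ u : (ZMod (orderOf x))ˣ, u = 1 ∨ u = -1)
    (h : Subgroup.zpowers x = Subgroup.zpowers y) : x = y ∨ x⁻¹ = y := by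
  obtain ⟨u, k, huk, rfl⟩ := exists_zmod_unit_of_zpowers_eq h
  have zpow_eq {l : ℤ} (hl : (l : ZMod (orderOf x)) = u) : x ^ l = x ^ k :=
    zpow_eq_zpow_iff_modEq.2 ((ZMod.intCast_eq_intCast_iff _ _ _).1 (hl.trans huk))
  refine (hx u).imp (fun hu ↦ ?_) fun hu ↦ ?_
  · simpa using zpow_eq (l := 1) (by simp [hu])
  · simpa using zpow_eq (l := -1) (by simp [hu])

/-- The relation whose classes are counted by the invariant `r` of the paper. -/
def IsConjOrInvConj (x y : G) : Prop :=
  IsConj x y ∨ IsConj x⁻¹ y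

variable (G) in
/-- Inverse semi-rational groups: every generator of a cyclic subgroup `⟨x⟩` is conjugate to `x`
or to `x⁻¹`. The notion is usually reserved for finite groups; here `G` may be infinite. -/
def IsInverseSemirational : Prop :=
  ∀ x y : G, Subgroup.zpowers x = Subgroup.zpowers y → IsConjOrInvConj x y

theorem isInverseSemirational_of_exponent_dvd {n : ℕ} [NeZero n] (hG : Monoid.exponent G ∣ n)
    (hn : ∀ u : (ZMod n)ˣ, u = 1 ∨ u = -1) : IsInverseSemirational G := by
  intro x y hxy
  have hx : orderOf x ∣ n := (Monoid.order_dvd_exponent x).trans hG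
  rcases eq_or_inv_eq_of_zpowers_eq (zmod_units_eq_one_or_neg_one_of_dvd hx hn) hxy with rfl | rfl
  · exact .inl (.refl _)
  · exact .inr (.refl _)

variable (G) in
/-- The cyclic subgroups of `G`, bundled as a type so that their conjugacy classes form a
quotient. -/
abbrev CyclicSubgroup : Type _ :=
  {H : Subgroup G // ∃ x, H = Subgroup.zpowers x}

namespace CyclicSubgroup

/-- Conjugacy of cyclic subgroups; its classes are counted by the invariant `q` of the paper. -/
def IsConjugate (H K : CyclicSubgroup G) : Prop :=
  ∃ g : G, Subgroup.map (MulAut.conj g).toMonoidHom H.1 = K.1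

theorem isConjugate_equivalence : Equivalence (IsConjugate (G := G)) where
  refl H := ⟨1, by ext; simp⟩
  symm := by
    rintro H K ⟨g, hg⟩
    refine ⟨g⁻¹, ?_⟩
    rw [← hg, Subgroup.map_map]
    ext
    simp [mul_assoc]
  trans := by
    rintro H K L ⟨g, hg⟩ ⟨k, hk⟩
    refine ⟨k * g, ?_⟩
    rw [← hk, ← hg, Subgroup.map_map, map_mul]
    rfl

/-- The cyclic subgroup `⟨x⟩` as a term of `CyclicSubgroup G`. -/
def zpowers (x : G) : CyclicSubgroup G :=
  ⟨Subgroup.zpowers x, x, rfl⟩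

theorem isConjugate_zpowers_iff {x y : G} :
    IsConjugate (zpowers x) (zpowers y) ↔
      ∃ g : G, Subgroup.zpowers (g * x * g⁻¹) = Subgroup.zpowers y := by
  simp [IsConjugate, zpowers, MonoidHom.map_zpowers]

end CyclicSubgroup

open CyclicSubgroup

theorem IsConjOrInvConj.isConjugate_zpowers {x y : G} (h : IsConjOrInvConj x y) :
    IsConjugate (zpowers x) (zpowers y) := by
  rw [isConjugate_zpowers_iff]
  rcases h with h | h
  · obtain ⟨g, rfl⟩ := isConj_iff.1 h
    exact ⟨g, rfl⟩
  · obtain ⟨g, rfl⟩ := isConj_iff.1 h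
    exact ⟨g, by rw [← Subgroup.zpowers_inv, conj_inv]⟩

theorem IsInverseSemirational.isConjOrInvConj (hG : IsInverseSemirational G) {x y : G}
    (h : IsConjugate (zpowers x) (zpowers y)) : IsConjOrInvConj x y := by
  obtain ⟨g, hg⟩ := isConjugate_zpowers_iff.1 h
  have hx : IsConj x (g * x * g⁻¹) := isConj_iff.2 ⟨g, rfl⟩
  have hx_inv : IsConj x⁻¹ (g * x * g⁻¹)⁻¹ := isConj_iff.2 ⟨g, conj_inv.symm⟩
  exact (hG _ _ hg).imp hx.trans hx_inv.trans

variable (G) in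
/-- The map induced by `x ↦ ⟨x⟩`, from the classes of elements up to conjugation and inversion to
the conjugacy classes of cyclic subgroups. -/
def zpowersClass :
    Quot (IsConjOrInvConj (G := G)) → Quot (IsConjugate (G := G)) :=
  Quot.map zpowers fun _ _ ↦ IsConjOrInvConj.isConjugate_zpowers

theorem zpowersClass_surjective : Function.Surjective (zpowersClass G) := by
  rintro ⟨_, x, rfl⟩
  exact ⟨Quot.mk _ x, rfl⟩

theorem IsInverseSemirational.zpowersClass_injective (hG : IsInverseSemirational G) :
    Function.Injective (zpowersClass G) := by
  rintro ⟨x⟩ ⟨y⟩ hxy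
  exact Quot.sound <| hG.isConjOrInvConj <|
    isConjugate_equivalence.eqvGen_iff.1 (Quot.eqvGen_exact hxy)

theorem D6_r_eq_q_general (hG : IsInverseSemirational G) :
    Nat.card (Quot (IsConjOrInvConj (G := G))) = Nat.card (Quot (IsConjugate (G := G))) :=
  Nat.card_eq_of_bijective (zpowersClass G) ⟨hG.zpowersClass_injective, zpowersClass_surjective⟩

theorem isInverseSemirational_dihedralGroup_six : IsInverseSemirational (DihedralGroup 6) :=
  isInverseSemirational_of_exponent_dvd (n := 6) (by rw [DihedralGroup.exponent]; decide)
    (by decide)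

/-- In `D_6`, the number of equivalence classes of elements under
`x ≈ y ↔ (y is conjugate to x or to x⁻¹)` equals the number of conjugacy classes of cyclic
subgroups (in the notation of the paper, `r = q`, so `Wh(D_6)` has rank 0). -/
theorem D6_r_eq_q :
    Nat.card (Quot (fun x y : DihedralGroup 6 => IsConj x y ∨ IsConj x⁻¹ y)) =
    Nat.card
      (Quot (fun H K : {H : Subgroup (DihedralGroup 6) // ∃ x, H = Subgroup.zpowers x} =>
        ∃ g : DihedralGroup 6,
          Subgroup.map (MulAut.conj g).toMonoidHom H.1 = K.1)) :=
  D6_r_eq_q_general isInverseSemirational_dihedralGroup_six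
end

section
/- The rational group algebra ℚ[D_6 × ℤ/2] of the direct product of the dihedral group of order 12 with the cyclic group of order 2 is isomorphic, as a ring, to the product ℚ⁸ × (M₂(ℚ))⁴ of eight copies of ℚ and four copies of the ring of 2 × 2 matrices over ℚ. -/
/-!
For odd `n` the Chinese remainder theorem splits `D_{2n}` as `D_n × ℤ/2`, so that
`D_6 × ℤ/2 ≅ (D_3 × ℤ/2) × ℤ/2`. Since `R[G × H] ≅ R[G] ⊗ R[H]`, a factor `H` with `R[H] ≅ Rⁿ`
replaces `R[G]` by `n` copies of itself, and `ℤ/2` is such a factor with `n = 2` as soon as `2` is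
invertible. What remains is `R[D_3] ≅ R² × M₂(R)`, through the trivial, sign and standard
representations.

The decompositions of `R[ℤ/2]` and `R[D_3]` come from one criterion. Let `ρ : G → A` be a
representation in an algebra free of rank `|G|`, and `τ : A → R` a linear form such that `τ 1` is a
unit and `τ (ρ g) = 0` for `g ≠ 1`. Then `R[G] → A` is bijective: up to the factor `τ 1`, Fourier
inversion `a ↦ (τ (a * ρ g⁻¹))_g` is a left inverse, and a surjection between free modules of the
same finite rank is bijective.
-/

open scoped TensorProduct

theorem trace_lift {R G A : Type*} [CommSemiring R] [Monoid G] [Semiring A] [Algebra R A]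
    {ρ : G →* A} {τ : A →ₗ[R] R} (hτ : ∀ g ≠ 1, τ (ρ g) = 0) (x : MonoidAlgebra R G) :
    τ (MonoidAlgebra.lift R A G ρ x) = τ 1 * x.coeff 1 := by
  induction x using MonoidAlgebra.induction_linear with
  | zero => simp
  | add x y hx hy => simp [hx, hy, mul_add]
  | single g c =>
    obtain rfl | hg := eq_or_ne g 1
    · simp [mul_comm]
    · simp [hτ g hg, hg]

theorem trace_lift_mul_inv {R G A : Type*} [CommSemiring R] [Group G] [Semiring A] [Algebra R A]
    {ρ : G →* A} {τ : A →ₗ[R] R} (hτ : ∀ g ≠ 1, τ (ρ g) = 0) (x : MonoidAlgebra R G) (g : G) :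
    τ (MonoidAlgebra.lift R A G ρ x * ρ g⁻¹) = τ 1 * x.coeff g := by
  have h := trace_lift hτ (x * MonoidAlgebra.single g⁻¹ 1)
  simpa [MonoidAlgebra.coeff_mul_single_apply] using h

theorem lift_bijective_of_trace {R G A : Type*} [CommRing R] [Group G] [Finite G] [Semiring A]
    [Algebra R A] {ρ : G →* A} {τ : A →ₗ[R] R} (b : Module.Basis G R A)
    (hτ_one : IsUnit (τ 1)) (hτ : ∀ g ≠ 1, τ (ρ g) = 0) :
    Function.Bijective (MonoidAlgebra.lift R A G ρ) := by
  let ψ : A →ₗ[R] G → R := LinearMap.pi fun g ↦ τ ∘ₗ LinearMap.mulRight R (ρ g⁻¹)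
  have hψ_lift : ψ ∘ MonoidAlgebra.lift R A G ρ =
      (hτ_one.unit • ·) ∘ Finsupp.equivFunOnFinite ∘ MonoidAlgebra.coeffEquiv := by
    ext x g
    exact trace_lift_mul_inv hτ x g
  have hcomp : Function.Bijective (ψ ∘ MonoidAlgebra.lift R A G ρ) := by
    rw [hψ_lift]
    exact (MulAction.bijective hτ_one.unit).comp
      (Finsupp.equivFunOnFinite.bijective.comp MonoidAlgebra.coeffEquiv.bijective)
  have : Module.Finite R A := .of_basis b
  have hψ : Function.Bijective ψ :=
    OrzechProperty.bijective_of_surjective_of_injective b.equivFun.toLinearMap ψ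
      b.equivFun.injective hcomp.surjective.of_comp
  exact (hψ.of_comp_iff' _).1 hcomp

section ProductGroups

variable (R G H : Type*) [CommSemiring R] [Monoid G] [Monoid H]

/-- The algebra homomorphism `R[G × H] → R[G] ⊗ R[H]` sending `(g, h)` to `g ⊗ h`. -/
noncomputable def monoidAlgebraProdHom :
    MonoidAlgebra R (G × H) →ₐ[R] MonoidAlgebra R G ⊗[R] MonoidAlgebra R H :=
  MonoidAlgebra.lift R _ (G × H)
    { toFun x := MonoidAlgebra.of R G x.1 ⊗ₜ MonoidAlgebra.of R H x.2
      map_one' := rfl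
      map_mul' x y := by simp [MonoidAlgebra.single_mul_single] }

theorem toLinearMap_monoidAlgebraProdHom :
    (monoidAlgebraProdHom R G H).toLinearMap =
      (MonoidAlgebra.tensorEquiv R).symm.toLinearMap := by
  ext x
  simp [monoidAlgebraProdHom, MonoidAlgebra.tensorEquiv_symm_single_eq_tmul_single_one]

/-- `R[G × H] ≅ R[G] ⊗ R[H]` as algebras; the underlying linear equivalence is
`MonoidAlgebra.tensorEquiv`. -/
noncomputable def monoidAlgebraProdEquiv :
    MonoidAlgebra R (G × H) ≃ₐ[R] MonoidAlgebra R G ⊗[R] MonoidAlgebra R H :=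
  .ofBijective (monoidAlgebraProdHom R G H) <| by
    rw [← AlgHom.coe_toLinearMap, toLinearMap_monoidAlgebraProdHom]
    exact (MonoidAlgebra.tensorEquiv R).symm.bijective

variable {R H}

/-- `R[G × H] ≅ R[G]^ι` as algebras, for a monoid `H` whose algebra is split: `R[H] ≅ R^ι`. -/
noncomputable def monoidAlgebraProdEquivPi {ι : Type*} [Fintype ι] [DecidableEq ι]
    (e : MonoidAlgebra R H ≃ₐ[R] (ι → R)) :
    MonoidAlgebra R (G × H) ≃ₐ[R] (ι → MonoidAlgebra R G) :=
  ((monoidAlgebraProdEquiv R G H).trans (Algebra.TensorProduct.congr .refl e)).trans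
    (Algebra.TensorProduct.piScalarRight R R _ ι)

end ProductGroups

/-- `(Aᵐ × Bⁿ)ᵏ ≅ Aᵏᵐ × Bᵏⁿ` as algebras. -/
def finPiProdPiEquiv (R A B : Type*) [CommSemiring R] [Semiring A] [Semiring B] [Algebra R A]
    [Algebra R B] (k m n : ℕ) :
    (Fin k → (Fin m → A) × (Fin n → B)) ≃ₐ[R] (Fin (k * m) → A) × (Fin (k * n) → B) where
  toFun f :=
    (fun p ↦ (f (finProdFinEquiv.symm p).1).1 (finProdFinEquiv.symm p).2,
      fun p ↦ (f (finProdFinEquiv.symm p).1).2 (finProdFinEquiv.symm p).2)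
  invFun f i := (fun j ↦ f.1 (finProdFinEquiv (i, j)), fun j ↦ f.2 (finProdFinEquiv (i, j)))
  left_inv f := by simp only [Equiv.symm_apply_apply]
  right_inv f := by simp only [Prod.mk.eta, Equiv.apply_symm_apply]
  map_add' _ _ := rfl
  map_mul' _ _ := rfl
  commutes' _ := rfl

section CyclicTwo

variable (R : Type*) [CommRing R]

/-- The trivial and the sign character of `ℤ/2`, as one homomorphism to `R²`. -/
def zmodTwoCharacters : Multiplicative (ZMod 2) →* (Fin 2 → R) :=
  MonoidHom.pi ![1, (AddChar.zmodChar 2 (ζ := (-1 : R)) (by simp)).toMonoidHom]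

theorem sum_zmodTwoCharacters {z : Multiplicative (ZMod 2)} (hz : z ≠ 1) :
    ∑ i, zmodTwoCharacters R z i = 0 := by
  obtain rfl : z = .ofAdd 1 := by revert z; decide
  simp [zmodTwoCharacters, AddChar.zmodChar_apply, ZMod.val_one]

variable {R}

theorem nonempty_monoidAlgebra_zmodTwo_algEquiv (h2 : IsUnit (2 : R)) :
    Nonempty (MonoidAlgebra R (Multiplicative (ZMod 2)) ≃ₐ[R] (Fin 2 → R)) := by
  let τ : (Fin 2 → R) →ₗ[R] R := ∑ i, LinearMap.proj i
  let b : Module.Basis (Multiplicative (ZMod 2)) R (Fin 2 → R) :=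
    (Pi.basisFun R (Fin 2)).reindex (Fintype.equivOfCardEq rfl)
  have hτ_one : IsUnit (τ 1) := by simpa [τ, one_add_one_eq_two] using h2
  have hτ (z) (hz : z ≠ 1) : τ (zmodTwoCharacters R z) = 0 := by
    simpa [τ] using sum_zmodTwoCharacters R hz
  exact ⟨.ofBijective _ (lift_bijective_of_trace b hτ_one hτ)⟩

theorem nonempty_monoidAlgebra_prod_zmodTwo_algEquiv (h2 : IsUnit (2 : R)) {G A B : Type*}
    [Monoid G] [Semiring A] [Semiring B] [Algebra R A] [Algebra R B] {m n : ℕ}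
    (e : MonoidAlgebra R G ≃ₐ[R] (Fin m → A) × (Fin n → B)) :
    Nonempty (MonoidAlgebra R (G × Multiplicative (ZMod 2)) ≃ₐ[R]
      (Fin (2 * m) → A) × (Fin (2 * n) → B)) := by
  obtain ⟨c⟩ := nonempty_monoidAlgebra_zmodTwo_algEquiv h2
  exact ⟨((monoidAlgebraProdEquivPi G c).trans (.piCongrRight fun _ ↦ e)).trans
    (finPiProdPiEquiv R A B 2 m n)⟩

end CyclicTwo

/-- `D_{2n} ≅ D_n × ℤ/2` for odd `n`, by the Chinese remainder theorem on the indices of both the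
rotations and the reflections. -/
def dihedralGroupMulTwoEquiv {n : ℕ} (hn : n.Coprime 2) :
    DihedralGroup (n * 2) ≃* DihedralGroup n × Multiplicative (ZMod 2) where
  toFun
    | .r i => (.r (ZMod.chineseRemainder hn i).1, .ofAdd (ZMod.chineseRemainder hn i).2)
    | .sr i => (.sr (ZMod.chineseRemainder hn i).1, .ofAdd (ZMod.chineseRemainder hn i).2)
  invFun
    | (.r i, z) => .r ((ZMod.chineseRemainder hn).symm (i, z.toAdd))
    | (.sr i, z) => .sr ((ZMod.chineseRemainder hn).symm (i, z.toAdd))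
  left_inv := by rintro (i | i) <;> simp
  right_inv := by rintro ⟨i | i, z⟩ <;> simp
  map_mul' := by
    -- Signs do not matter modulo `2`, so `j - i` and `i + j` agree in the second component.
    rintro (i | i) (j | j) <;> simp [← ofAdd_add, CharTwo.sub_eq_add, add_comm]

section DihedralThree

/-- The standard representation of `D_3` on `ℤ[ω]`, with `ω` a primitive cube root of unity, in the
basis `1, ω`: `r` is multiplication by `ω` and `s` swaps `1` and `ω`. -/
def dihedralThreeStandard : DihedralGroup 3 →* Matrix (Fin 2) (Fin 2) ℤ where
  toFun
    | .r i => !![0, -1; 1, -1] ^ i.val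
    | .sr i => !![0, 1; 1, 0] * !![0, -1; 1, -1] ^ i.val
  map_one' := rfl
  map_mul' := by decide +kernel

theorem one_add_det_add_two_mul_trace_dihedralThreeStandard :
    ∀ g ≠ 1, 1 + (dihedralThreeStandard g).det + 2 * (dihedralThreeStandard g).trace = 0 := by
  decide +kernel

variable (R : Type*) [CommRing R]

/-- The trivial, sign and standard representations of `D_3` over `R`, as one homomorphism to
`R² × M₂(R)`. The sign is obtained as the determinant of the standard representation. -/
def dihedralThreeRep : DihedralGroup 3 →* (Fin 2 → R) × (Fin 1 → Matrix (Fin 2) (Fin 2) R) :=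
  let standard : DihedralGroup 3 →* Matrix (Fin 2) (Fin 2) R :=
    (Int.castRingHom R).mapMatrix.toMonoidHom.comp dihedralThreeStandard
  (MonoidHom.pi ![1, Matrix.detMonoidHom.comp standard]).prod (MonoidHom.pi fun _ ↦ standard)

/-- The linear form on `R² × M₂(R)` that weights the trace on each factor by the degree of the
corresponding representation, so that its composition with `dihedralThreeRep` is the character of
the regular representation of `D_3`. -/
def dihedralThreeTrace : ((Fin 2 → R) × (Fin 1 → Matrix (Fin 2) (Fin 2) R)) →ₗ[R] R :=
  (∑ i, LinearMap.proj i).coprod (2 • Matrix.traceLinearMap (Fin 2) R R ∘ₗ LinearMap.proj 0)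

theorem dihedralThreeTrace_one : dihedralThreeTrace R 1 = 6 := by
  have h : (1 + 1 + 2 * 2 : R) = 6 := by norm_num
  simpa [dihedralThreeTrace] using h

theorem dihedralThreeTrace_rep {g : DihedralGroup 3} (hg : g ≠ 1) :
    dihedralThreeTrace R (dihedralThreeRep R g) = 0 := by
  have h := congrArg (Int.cast : ℤ → R)
    (one_add_det_add_two_mul_trace_dihedralThreeStandard g hg)
  simpa [dihedralThreeTrace, dihedralThreeRep, Matrix.trace_fin_two, Int.cast_det, mul_add] using h

variable {R}

theorem nonempty_monoidAlgebra_dihedralThree_algEquiv (h6 : IsUnit (6 : R)) :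
    Nonempty (MonoidAlgebra R (DihedralGroup 3) ≃ₐ[R]
      (Fin 2 → R) × (Fin 1 → Matrix (Fin 2) (Fin 2) R)) := by
  let b : Module.Basis (DihedralGroup 3) R ((Fin 2 → R) × (Fin 1 → Matrix (Fin 2) (Fin 2) R)) :=
    ((Pi.basisFun R (Fin 2)).prod (Pi.basis fun _ ↦ Matrix.stdBasis R (Fin 2) (Fin 2))).reindex
      (Fintype.equivOfCardEq rfl)
  have hτ_one : IsUnit (dihedralThreeTrace R 1) := by rwa [dihedralThreeTrace_one]
  exact ⟨.ofBijective _ (lift_bijective_of_trace b hτ_one fun _ ↦ dihedralThreeTrace_rep R)⟩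

end DihedralThree

theorem rat_group_algebra_D6_prod_Z2_general {R : Type*} [CommRing R] (h6 : IsUnit (6 : R)) :
    Nonempty
      (MonoidAlgebra R (DihedralGroup 6 × Multiplicative (ZMod 2)) ≃ₐ[R]
        (Fin 8 → R) × (Fin 4 → Matrix (Fin 2) (Fin 2) R)) := by
  have h2 : IsUnit (2 : R) := isUnit_of_dvd_unit ⟨3, by norm_num⟩ h6
  obtain ⟨e₃⟩ := nonempty_monoidAlgebra_dihedralThree_algEquiv h6
  obtain ⟨e₆⟩ := nonempty_monoidAlgebra_prod_zmodTwo_algEquiv h2 e₃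
  obtain ⟨e⟩ := nonempty_monoidAlgebra_prod_zmodTwo_algEquiv h2 e₆
  let split : DihedralGroup 6 × Multiplicative (ZMod 2) ≃*
      (DihedralGroup 3 × Multiplicative (ZMod 2)) × Multiplicative (ZMod 2) :=
    (dihedralGroupMulTwoEquiv (n := 3) (by norm_num)).prodCongr (.refl _)
  exact ⟨(MonoidAlgebra.domCongr R R split).trans e⟩

/-- `ℚ[D_6 × ℤ/2] ≅ ℚ⁸ × (M₂(ℚ))⁴` as rings. -/
theorem rat_group_algebra_D6_prod_Z2 :
    Nonempty
      (MonoidAlgebra ℚ (DihedralGroup 6 × Multiplicative (ZMod 2)) ≃+*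
        (Fin 8 → ℚ) × (Fin 4 → Matrix (Fin 2) (Fin 2) ℚ)) := by
  exact (rat_group_algebra_D6_prod_Z2_general (by norm_num)).map AlgEquiv.toRingEquiv
end

section
/- The quotient of the group algebra 𝔽₃[D_6 × ℤ/2] by its Jacobson radical is isomorphic, as a ring, to the product (𝔽₃)⁸ of eight copies of the field with three elements. (This is the algebraic content behind the identification K₀(ẑ₃[D_6 × ℤ/2]) ≅ K₀(𝔽₃[(ℤ/2)³]) ≅ ℤ⁸.) -/
/-!
Over a field `k` of characteristic `p`, a finite `p`-group acting on a nonzero `k`-space has a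
nonzero fixed vector. Hence a finite normal `p`-subgroup `N` of `G` acts trivially on every simple
`k[G]`-module, so the kernel of `k[G] → k[G ⧸ N]` lies in the Jacobson radical. When `G ⧸ N` is
abelian of order `m` and `k` contains enough roots of unity, evaluating at the characters of `G ⧸ N`
identifies `k[G ⧸ N]` with `k ^ m`, which has zero Jacobson radical; so the kernel is the whole
radical. In `D_{2pⁿ} × ℤ/2` with `p` odd the even rotations form such an `N`, with quotient
`(ℤ/2)³`.
-/

open MonoidAlgebra

section Jacobson

variable {R S : Type*} [Ring R] [Ring S]

theorem twoSidedIdeal_jacobson_bot_eq_ker {f : R →+* S} (hf : Function.Surjective f)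
    (hker : RingHom.ker f ≤ Ring.jacobson R) (hS : Ring.jacobson S = ⊥) :
    TwoSidedIdeal.jacobson (⊥ : TwoSidedIdeal R) = TwoSidedIdeal.ker f := by
  have : RingHomSurjective f := ⟨hf⟩
  have hcomap : Ideal.comap f (Ring.jacobson S) = Ring.jacobson R :=
    Module.comap_jacobson_of_ker_le (f := f.toSemilinearMap) hf hker
  have hbot : (⊥ : Ideal R).jacobson = Ring.jacobson R := by
    simp only [Ideal.jacobson, bot_le, true_and, Ring.jacobson_eq_sInf_isMaximal]
  ext x
  rw [← TwoSidedIdeal.mem_asIdeal, TwoSidedIdeal.asIdeal_jacobson, TwoSidedIdeal.bot_asIdeal, hbot,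
    ← hcomap, hS, Ideal.mem_comap, Ideal.mem_bot, TwoSidedIdeal.mem_ker]

theorem nonempty_quotient_jacobson_ringEquiv {f : R →+* S} (hf : Function.Surjective f)
    (hker : RingHom.ker f ≤ Ring.jacobson R) (hS : Ring.jacobson S = ⊥) :
    Nonempty ((TwoSidedIdeal.jacobson (⊥ : TwoSidedIdeal R)).ringCon.Quotient ≃+* S) := by
  rw [twoSidedIdeal_jacobson_bot_eq_ker hf hker hS]
  exact ⟨RingCon.quotientKerEquivOfSurjective f hf⟩

end Jacobson

section FixedVectors

theorem prime_dvd_natCard_of_nsmul_eq_zero {p : ℕ} [Fact p.Prime] {M : Type*} [AddGroup M]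
    [Nontrivial M] (hM : ∀ x : M, p • x = 0) : p ∣ Nat.card M := by
  obtain ⟨x, hx⟩ := exists_ne (0 : M)
  exact addOrderOf_eq_prime (hM x) hx ▸ addOrderOf_dvd_natCard x

theorem finite_closure_of_nsmul_eq_zero {n : ℕ} (hn : n ≠ 0) {M : Type*} [AddCommGroup M]
    (hM : ∀ x : M, n • x = 0) {s : Set M} (hs : s.Finite) : Finite (AddSubgroup.closure s) := by
  have : Finite s := hs
  refine AddCommGroup.finite_of_fg_isAddTorsion _ fun x ↦ ?_
  exact isOfFinAddOrder_iff_nsmul_eq_zero.mpr ⟨n, hn.bot_lt, Subtype.ext (hM x)⟩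

theorem smul_mem_closure_orbit {P M : Type*} [Monoid P] [AddGroup M] [DistribMulAction P M]
    (v : M) (g : P) {x : M} (hx : x ∈ AddSubgroup.closure (MulAction.orbit P v)) :
    g • x ∈ AddSubgroup.closure (MulAction.orbit P v) := by
  induction hx using AddSubgroup.closure_induction with
  | mem y hy => exact AddSubgroup.subset_closure (MulAction.mem_orbit_of_mem_orbit g hy)
  | zero => simp
  | add y z _ _ hy hz => exact smul_add g y z ▸ add_mem hy hz
  | neg y _ hy => exact smul_neg g y ▸ neg_mem hy

theorem exists_ne_zero_forall_smul_eq {p : ℕ} [Fact p.Prime] {P M : Type*} [Group P]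
    [Finite P] (hP : IsPGroup p P) [AddCommGroup M] [Nontrivial M] [DistribMulAction P M]
    (hM : ∀ x : M, p • x = 0) : ∃ x : M, x ≠ 0 ∧ ∀ g : P, g • x = x := by
  obtain ⟨v, hv⟩ := exists_ne (0 : M)
  -- The additive span of an orbit is a finite `p`-group, so its fixed points are counted mod `p`.
  let W := AddSubgroup.closure (MulAction.orbit P v)
  let WP : SubMulAction P M := ⟨W, smul_mem_closure_orbit v⟩
  have : Finite WP := finite_closure_of_nsmul_eq_zero (NeZero.ne p) hM (Set.finite_range _)
  have : Nontrivial W :=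
    ⟨⟨v, AddSubgroup.subset_closure (MulAction.mem_orbit_self v)⟩, 0,
      fun h ↦ hv (congrArg Subtype.val h)⟩
  have hcard : p ∣ Nat.card WP :=
    prime_dvd_natCard_of_nsmul_eq_zero (M := W) fun x ↦ Subtype.ext (hM x)
  have hzero : (⟨0, W.zero_mem⟩ : WP) ∈ MulAction.fixedPoints P WP :=
    fun g ↦ Subtype.ext (smul_zero g)
  obtain ⟨x, hx, hne⟩ := hP.exists_fixed_point_of_prime_dvd_card_of_fixed_point WP hcard hzero
  exact ⟨x, fun h ↦ hne (Subtype.ext h.symm), fun g ↦ congrArg Subtype.val (hx g)⟩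

end FixedVectors

section NormalPSubgroup

variable {k G M : Type*} [Ring k] [Group G]

/-- The submodule of vectors fixed by a normal subgroup `N` of `G` in a module over `k[G]`;
normality of `N` is what makes it stable under `G`. -/
def fixedSubmodule [AddCommGroup M] [Module k[G] M] (N : Subgroup G) [N.Normal] :
    Submodule k[G] M where
  carrier := {x | ∀ n ∈ N, of k G n • x = x}
  add_mem' hx hy n hn := by rw [smul_add, hx n hn, hy n hn]
  zero_mem' n _ := smul_zero _
  smul_mem' a x hx n hn := by
    induction a using induction_linear with
    | zero => simp
    | add a b ha hb => rw [add_smul, smul_add, ha, hb]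
    | single g c =>
      have hcomm : of k G n * single g c = single g c * of k G (g⁻¹ * n * g) := by
        simp [single_mul_single, mul_assoc]
      rw [← mul_smul, hcomm, mul_smul, hx _ (Subgroup.Normal.conj_mem' ‹_› n hn g)]

variable {p : ℕ} [Fact p.Prime] [CharP k p] {N : Subgroup G} [N.Normal] [Finite N]

theorem of_smul_eq_of_isSimpleModule [AddCommGroup M] [Module k[G] M] [IsSimpleModule k[G] M]
    (hN : IsPGroup p N) {n : G} (hn : n ∈ N) (x : M) : of k G n • x = x := by
  have hp : (p : k[G]) = 0 := by simp [natCast_def]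
  have hM (y : M) : p • y = 0 := by rw [← Nat.cast_smul_eq_nsmul k[G], hp, zero_smul]
  have : Nontrivial M := IsSimpleModule.nontrivial k[G] M
  let : DistribMulAction N M := .compHom M ((of k G).comp N.subtype)
  obtain ⟨y, hy, hfix⟩ := exists_ne_zero_forall_smul_eq hN hM
  have htop : fixedSubmodule N = (⊤ : Submodule k[G] M) :=
    (eq_bot_or_eq_top _).resolve_left <|
      (Submodule.ne_bot_iff _).mpr ⟨y, fun n hn ↦ hfix ⟨n, hn⟩, hy⟩
  exact (htop ▸ Submodule.mem_top : x ∈ fixedSubmodule N) n hn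

theorem of_sub_one_mem_jacobson (hN : IsPGroup p N) {n : G} (hn : n ∈ N) :
    of k G n - 1 ∈ Ring.jacobson k[G] := by
  rw [Ring.jacobson, Module.jacobson, Submodule.mem_sInf]
  intro m hm
  have : IsSimpleModule k[G] (k[G] ⧸ m) := isSimpleModule_iff_isCoatom.mpr hm
  have hfix := of_smul_eq_of_isSimpleModule (k := k) hN hn (m.mkQ 1)
  rw [← map_smul, smul_eq_mul, mul_one] at hfix
  exact (Submodule.Quotient.eq m).mp hfix

end NormalPSubgroup

section MapDomain

theorem mapDomainRingHom_surjective {k G H : Type*} [Semiring k] [Monoid G] [Monoid H]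
    {π : G →* H} (hπ : Function.Surjective π) :
    Function.Surjective (mapDomainRingHom k π) := fun y ↦ by
  obtain ⟨x, hx⟩ := Finsupp.mapDomain_surjective hπ y.coeff
  exact ⟨.ofCoeff x, congrArg ofCoeff hx⟩

theorem ker_mapDomainRingHom_le {k G H : Type*} [Ring k] [Group G] [Group H] (π : G →* H)
    {I : Ideal k[G]} (hI : ∀ n ∈ π.ker, of k G n - 1 ∈ I) :
    RingHom.ker (mapDomainRingHom k π) ≤ I := by
  let s : H → G := Function.invFun π
  have hs (g : G) : π (s (π g)) = π g := Function.invFun_eq ⟨g, rfl⟩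
  have hsub (x : k[G]) : x - mapDomain s (mapDomain π x) ∈ I := by
    induction x using induction_linear with
    | zero => simp
    | add x y hx hy => simpa only [mapDomain_add, add_sub_add_comm] using add_mem hx hy
    | single g c =>
      have hn : (s (π g))⁻¹ * g ∈ π.ker := by simp [MonoidHom.mem_ker, hs]
      convert I.mul_mem_left (single (s (π g)) c) (hI _ hn) using 1
      simp [mul_sub, single_mul_single]
  intro x hx
  have hx' : mapDomain π x = 0 := hx
  simpa [hx'] using hsub x

end MapDomain

section Characters

/-- The algebra map `k[G] → k^ι` given by evaluation at a family of characters of `G`. -/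
noncomputable def evalCharacters {k G ι : Type*} [CommSemiring k] [Monoid G] (χ : ι → G →* k) :
    k[G] →ₐ[k] (ι → k) :=
  AlgHom.pi fun i ↦ MonoidAlgebra.lift k k G (χ i)

theorem evalCharacters_surjective {k G ι : Type*} [Field k] [Monoid G] [Finite ι]
    {χ : ι → G →* k} (hχ : Function.Injective χ) : Function.Surjective (evalCharacters χ) := by
  have hindep : LinearIndependent k fun i ↦ (χ i : G → k) :=
    (linearIndependent_monoidHom G k).comp χ hχ
  have hspan := span_flip_eq_top_iff_linearIndependent.mpr hindep
  rw [← AlgHom.coe_toLinearMap, ← LinearMap.range_eq_top, eq_top_iff, ← hspan, Submodule.span_le]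
  rintro _ ⟨g, rfl⟩
  exact ⟨of k G g, by ext i; simp [evalCharacters, flip]⟩

end Characters

section AbelianQuotient

variable {k A : Type*} [Field k] [CommGroup A] [Finite A]
  [HasEnoughRootsOfUnity k (Monoid.exponent A)]

variable (k A) in
theorem nonempty_algEquiv_pi_of_hasEnoughRootsOfUnity :
    Nonempty (k[A] ≃ₐ[k] (Fin (Nat.card A) → k)) := by
  have hcard : Nat.card (A →* kˣ) = Nat.card A :=
    CommGroup.card_monoidHom_of_hasEnoughRootsOfUnity A k
  let e : Fin (Nat.card A) ≃ (A →* kˣ) := (finCongr hcard.symm).trans (Finite.equivFin _).symm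
  let χ (i : Fin (Nat.card A)) : A →* k := (Units.coeHom k).comp (e i)
  have hχ : Function.Injective χ := fun i j h ↦
    e.injective (MonoidHom.ext fun a ↦ Units.ext (DFunLike.congr_fun h a))
  have hsurj : Function.Surjective (evalCharacters χ) := evalCharacters_surjective hχ
  have : FiniteDimensional k k[A] := .equiv (coeffLinearEquiv (M := A) k).symm
  have hrank : Module.finrank k k[A] = Module.finrank k (Fin (Nat.card A) → k) := by
    have := Fintype.ofFinite A
    rw [(coeffLinearEquiv (M := A) k).finrank_eq, Module.finrank_finsupp_self,
      Module.finrank_fin_fun, Nat.card_eq_fintype_card]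
  have hinj : Function.Injective (evalCharacters χ).toLinearMap :=
    (LinearMap.injective_iff_surjective_of_finrank_eq_finrank hrank).mpr hsurj
  exact ⟨.ofBijective _ ⟨hinj, hsurj⟩⟩

theorem nonempty_quotient_jacobson_ringEquiv_of_isPGroup_ker {p : ℕ} [Fact p.Prime] [CharP k p]
    {G : Type*} [Group G] {π : G →* A} (hπ : Function.Surjective π) [Finite π.ker]
    (hker : IsPGroup p π.ker) :
    Nonempty ((TwoSidedIdeal.jacobson (⊥ : TwoSidedIdeal k[G])).ringCon.Quotient ≃+*
      (Fin (Nat.card A) → k)) := by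
  obtain ⟨e⟩ := nonempty_algEquiv_pi_of_hasEnoughRootsOfUnity k A
  let f : k[G] →+* (Fin (Nat.card A) → k) := (e : k[A] →+* _).comp (mapDomainRingHom k π)
  have hf : Function.Surjective f := e.surjective.comp (mapDomainRingHom_surjective hπ)
  have hfker : RingHom.ker f = RingHom.ker (mapDomainRingHom k π) :=
    RingHom.ker_comp_of_injective _ e.injective
  refine nonempty_quotient_jacobson_ringEquiv hf ?_ (IsSemisimpleRing.jacobson_eq_bot _)
  rw [hfker]
  exact ker_mapDomainRingHom_le π fun n hn ↦ of_sub_one_mem_jacobson hker hn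

end AbelianQuotient

theorem hasEnoughRootsOfUnity_two (k : Type*) [Field k] {p : ℕ} [CharP k p] (hp : p ≠ 2) :
    HasEnoughRootsOfUnity k 2 where
  prim := ⟨-1, IsPrimitiveRoot.neg_one p hp⟩
  cyc := rootsOfUnity.isCyclic k 2

section Dihedral

/-- The homomorphism `D_{2m} → (ℤ/2)²` recording the parity of the index of `r i` or `sr i` and
whether the element is a reflection. It is the abelianization map of `D_{2m}`. -/
def dihedralParity (m : ℕ) : DihedralGroup (2 * m) →* Multiplicative (ZMod 2 × ZMod 2) where
  toFun
    | .r i => .ofAdd (ZMod.castHom (dvd_mul_right 2 m) (ZMod 2) i, 0)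
    | .sr i => .ofAdd (ZMod.castHom (dvd_mul_right 2 m) (ZMod 2) i, 1)
  map_one' := congrArg (fun a : ZMod 2 ↦ Multiplicative.ofAdd (a, (0 : ZMod 2))) (map_zero _)
  map_mul' := by
    rintro (i | i) (j | j) <;>
      simp [← ofAdd_add, CharTwo.sub_eq_add, CharTwo.add_self_eq_zero, add_comm]

theorem dihedralParity_surjective (m : ℕ) : Function.Surjective (dihedralParity m) := by
  rintro ⟨a, b⟩
  obtain ⟨i, rfl⟩ := ZMod.castHom_surjective (dvd_mul_right 2 m) a
  obtain rfl | rfl : b = 0 ∨ b = 1 := by decide +revert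
  · exact ⟨.r i, rfl⟩
  · exact ⟨.sr i, rfl⟩

theorem pow_eq_one_of_dihedralParity_eq_one {m : ℕ} {g : DihedralGroup (2 * m)}
    (hg : dihedralParity m g = 1) : g ^ m = 1 := by
  rcases g with i | i
  · have hi : ZMod.castHom (dvd_mul_right 2 m) (ZMod 2) i = 0 :=
      congrArg (fun a ↦ a.toAdd.1) hg
    obtain ⟨z, rfl⟩ := ZMod.intCast_surjective i
    rw [map_intCast, ZMod.intCast_zmod_eq_zero_iff_dvd] at hi
    obtain ⟨w, rfl⟩ := hi
    have hm : (2 * m : ZMod (2 * m)) = 0 := mod_cast ZMod.natCast_self (2 * m)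
    rw [DihedralGroup.r_pow, DihedralGroup.one_def]
    congr 1
    push_cast
    linear_combination (w : ZMod (2 * m)) * hm
  · exact absurd (congrArg (fun a ↦ a.toAdd.2) hg) one_ne_zero

end Dihedral

theorem F3_group_algebra_D6_prod_Z2_mod_jacobson_general {p : ℕ} [Fact p.Prime] (hp : p ≠ 2) (n : ℕ)
    (k : Type*) [Field k] [CharP k p] :
    Nonempty
      ((TwoSidedIdeal.jacobson
          (⊥ : TwoSidedIdeal
            k[DihedralGroup (2 * p ^ n) × Multiplicative (ZMod 2)])).ringCon.Quotient
        ≃+* (Fin 8 → k)) := by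
  let A := Multiplicative (ZMod 2 × ZMod 2) × Multiplicative (ZMod 2)
  let π : DihedralGroup (2 * p ^ n) × Multiplicative (ZMod 2) →* A :=
    (dihedralParity (p ^ n)).prodMap (.id _)
  have hπ : Function.Surjective π := (dihedralParity_surjective _).prodMap Function.surjective_id
  have hker : IsPGroup p π.ker := by
    rintro ⟨⟨g, c⟩, hgc⟩
    obtain ⟨hg, rfl⟩ : dihedralParity (p ^ n) g = 1 ∧ c = 1 := Prod.ext_iff.mp hgc
    exact ⟨n, Subtype.ext (Prod.ext (pow_eq_one_of_dihedralParity_eq_one hg) (one_pow _))⟩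
  have hexp : Monoid.exponent A ∣ 2 := Monoid.exponent_dvd_of_forall_pow_eq_one (by decide)
  have := hasEnoughRootsOfUnity_two k hp
  have : HasEnoughRootsOfUnity k (Monoid.exponent A) := .of_dvd k hexp
  have hA : Nat.card A = 8 := by rw [Nat.card_eq_fintype_card]; rfl
  exact hA ▸ nonempty_quotient_jacobson_ringEquiv_of_isPGroup_ker hπ hker

/-- The quotient of `𝔽₃[D_6 × ℤ/2]` by its Jacobson radical (the Jacobson
radical of the zero two-sided ideal) is isomorphic, as a ring, to `(𝔽₃)⁸`. -/
theorem F3_group_algebra_D6_prod_Z2_mod_jacobson :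
    Nonempty
      ((TwoSidedIdeal.jacobson
          (⊥ : TwoSidedIdeal
            (MonoidAlgebra (ZMod 3) (DihedralGroup 6 × Multiplicative (ZMod 2))))).ringCon.Quotient
        ≃+* (Fin 8 → ZMod 3)) :=
  F3_group_algebra_D6_prod_Z2_mod_jacobson_general (p := 3) (by decide) 1 (ZMod 3)
end
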